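/- Let ν ∈ [0,1] and set, with either choice of sign, τ(x) = 1 ± sinh(νx)/cosh(x) for x > 0. Then the Laplace transform L(τ) is a generalized Stieltjes function of order 2 (hence logarithmically completely monotonic), and for x > 0: L(τ)(x) = 1/x ± (1/2)(β((x+1-ν)/2) - β((x+1+ν)/2)), where β is Nielsen's beta function. -/

import Mathlib

open MeasureTheory Filter Set

/-- The Laplace transform of `g`. -/
noncomputable def LaplaceTransform (g : ℝ → ℝ) (x : ℝ) : ℝ :=
  ∫ t in Set.Ioi (0:ℝ), Real.exp (-x * t) * g t

/-- `f` is completely monotonic on `(0,∞)`. -/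
def CompletelyMonotonic (f : ℝ → ℝ) : Prop :=
  (∀ x : ℝ, 0 < x → ContDiffAt ℝ (⊤ : ℕ∞) f x) ∧
  ∀ (n : ℕ) (x : ℝ), 0 < x → 0 ≤ (-1 : ℝ) ^ n * iteratedDeriv n f x

/-- `f` is logarithmically completely monotonic on `(0,∞)`. -/
def LogCompletelyMonotonic (f : ℝ → ℝ) : Prop :=
  (∀ x : ℝ, 0 < x → 0 < f x) ∧ (∀ x : ℝ, 0 < x → ContDiffAt ℝ (⊤ : ℕ∞) f x) ∧
  CompletelyMonotonic (fun x => -deriv f x / f x)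

/-- `f` is a generalized Stieltjes function of order `lam` on `(0,∞)`. -/
def IsGenStieltjes (lam : ℝ) (f : ℝ → ℝ) : Prop :=
  ∃ (μ : Measure ℝ) (c : ℝ), 0 ≤ c ∧ μ (Set.Iio 0) = 0 ∧
    ∀ x : ℝ, 0 < x →
      Integrable (fun t => (x + t) ^ (-lam)) μ ∧
      f x = (∫ t, (x + t) ^ (-lam) ∂μ) + c

/-- Nielsen's beta function. -/
noncomputable def nielsenBeta (x : ℝ) : ℝ :=
  ∫ t in Set.Ioi (0:ℝ), Real.exp (-x * t) / (1 + Real.exp (-t))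

/-!
The function `τ` satisfies `τ(t) = t L(w)(t)`, where `w ≥ 0` is `1` plus or minus an antiperiodic
square wave, so Fubini gives `L(τ)(x) = ∫ w(s) (x + s)⁻² ds`. The formula with `β` follows by
writing `sinh (ν t) / cosh t` in exponentials.

Let now `f(x) = ∫ (x + t)⁻² dμ(t) + c` be positive. The function `-f' / f` is completely monotonic
if, for each `x > 0`, the Taylor series of `t ↦ f(x - t)` at `0` has a logarithmic derivative with
nonnegative coefficients. That series is `∑ (k + 1) mₖ zᵏ` with `mₖ` the moments of a measure on
`[0, ∞)`, and by approximation it may be taken to be that of a rational function `∑ pᵢ / (bᵢ - z)²`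
with `pᵢ, bᵢ > 0`. There the coefficients in question are `2 ∑ bᵢ⁻ⁿ - ∑ ζ⁻ⁿ`, where `ζ` runs over
the zeros, which are not real. The vectors `(√pᵢ / (bᵢ - ζ)²)ᵢ` for the zeros `ζ` in one half-plane
satisfy a Lyapunov relation with `B = diag(b)`. Consequently their Gram–Schmidt basis `e_ζ` has
`Re ζ = ⟪e_ζ, B e_ζ⟫`, which is an average of the `bᵢ`, and Jensen's inequality yields
`∑ |ζ|⁻ⁿ ≤ ∑ bᵢ⁻ⁿ` over that half-plane.
-/

section LogDerivSeries

open PowerSeries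

variable {K : Type*} [Field K]

/-- The formal logarithmic derivative `Φ' / Φ`. As `Φ⁻¹ = 0` when `Φ` has zero constant coefficient,
it is `0` for such `Φ`. -/
noncomputable def logDerivSeries (Φ : K⟦X⟧) : K⟦X⟧ := d⁄dX K Φ * Φ⁻¹

lemma logDerivSeries_mul_self {Φ : K⟦X⟧} (hΦ : constantCoeff Φ ≠ 0) :
    logDerivSeries Φ * Φ = d⁄dX K Φ := by
  rw [logDerivSeries, mul_assoc, PowerSeries.inv_mul_cancel Φ hΦ, mul_one]

lemma logDerivSeries_eq_of_mul_eq {Φ Ψ : K⟦X⟧} (hΦ : constantCoeff Φ ≠ 0)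
    (h : Ψ * Φ = d⁄dX K Φ) : logDerivSeries Φ = Ψ :=
  ((eq_mul_inv_iff_mul_eq hΦ).2 h).symm

lemma logDerivSeries_C (a : K) : logDerivSeries (C a : K⟦X⟧) = 0 := by
  simp [logDerivSeries]

lemma logDerivSeries_mul {Φ Ψ : K⟦X⟧} (hΦ : constantCoeff Φ ≠ 0) (hΨ : constantCoeff Ψ ≠ 0) :
    logDerivSeries (Φ * Ψ) = logDerivSeries Φ + logDerivSeries Ψ := by
  refine logDerivSeries_eq_of_mul_eq (by simp [hΦ, hΨ]) ?_
  rw [Derivation.leibniz, ← logDerivSeries_mul_self hΦ, ← logDerivSeries_mul_self hΨ, smul_eq_mul,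
    smul_eq_mul]
  ring

lemma logDerivSeries_C_mul {a : K} (ha : a ≠ 0) {Φ : K⟦X⟧} (hΦ : constantCoeff Φ ≠ 0) :
    logDerivSeries (C a * Φ) = logDerivSeries Φ := by
  rw [logDerivSeries_mul (by simpa using ha) hΦ, logDerivSeries_C, zero_add]

lemma logDerivSeries_multiset_prod {ι : Type*} (s : Multiset ι) (Φ : ι → K⟦X⟧)
    (hΦ : ∀ i ∈ s, constantCoeff (Φ i) ≠ 0) :
    logDerivSeries (s.map Φ).prod = (s.map fun i => logDerivSeries (Φ i)).sum := by
  induction s using Multiset.induction_on with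
  | empty => simpa using logDerivSeries_C (1 : K)
  | cons i s ih =>
    have hs : ∀ j ∈ s, constantCoeff (Φ j) ≠ 0 := fun j hj => hΦ j (Multiset.mem_cons_of_mem hj)
    have hprod : constantCoeff (s.map Φ).prod ≠ 0 := by
      rw [map_multiset_prod, Multiset.map_map]
      exact Multiset.prod_ne_zero (by simpa using hs)
    rw [Multiset.map_cons, Multiset.prod_cons, Multiset.map_cons, Multiset.sum_cons,
      logDerivSeries_mul (hΦ i (Multiset.mem_cons_self i s)) hprod, ih hs]

lemma map_logDerivSeries {L : Type*} [Field L] (σ : K →+* L) (Φ : K⟦X⟧) :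
    (logDerivSeries Φ).map σ = logDerivSeries (Φ.map σ) := by
  have hconst : constantCoeff (Φ.map σ) = σ (constantCoeff Φ) := by
    rw [← coeff_zero_eq_constantCoeff_apply, coeff_map, coeff_zero_eq_constantCoeff_apply]
  by_cases hΦ : constantCoeff Φ = 0
  · have hΦσ : constantCoeff (Φ.map σ) = 0 := by rw [hconst, hΦ, map_zero]
    simp [logDerivSeries, PowerSeries.inv_eq_zero.2 hΦ, PowerSeries.inv_eq_zero.2 hΦσ]
  · refine (logDerivSeries_eq_of_mul_eq (by simpa [hconst] using hΦ) ?_).symm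
    rw [← map_mul, logDerivSeries_mul_self hΦ]
    ext n
    simp [coeff_derivative]

lemma coeff_logDerivSeries (Φ : K⟦X⟧) (m : ℕ) :
    coeff m (logDerivSeries Φ) = ((m + 1) * coeff (m + 1) Φ -
      ∑ j ∈ Finset.range m, coeff j (logDerivSeries Φ) * coeff (m - j) Φ) / constantCoeff Φ := by
  by_cases hΦ : constantCoeff Φ = 0
  · simp [logDerivSeries, PowerSeries.inv_eq_zero.2 hΦ, hΦ]
  · have hcoeff := congrArg (coeff m) (logDerivSeries_mul_self hΦ)
    rw [coeff_mul, Finset.Nat.sum_antidiagonal_eq_sum_range_succ_mk, Finset.sum_range_succ,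
      Nat.sub_self, coeff_zero_eq_constantCoeff_apply, coeff_derivative] at hcoeff
    rw [eq_div_iff hΦ]
    linear_combination hcoeff

lemma coeff_logDerivSeries_congr {Φ Ψ : K⟦X⟧} {m : ℕ}
    (h : ∀ k ≤ m + 1, coeff k Φ = coeff k Ψ) :
    coeff m (logDerivSeries Φ) = coeff m (logDerivSeries Ψ) := by
  induction m using Nat.strong_induction_on with
  | _ m ih =>
    have hconst : constantCoeff Φ = constantCoeff Ψ := by simpa using h 0 (Nat.zero_le _)
    have hsum : ∀ j ∈ Finset.range m, coeff j (logDerivSeries Φ) * coeff (m - j) Φ =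
        coeff j (logDerivSeries Ψ) * coeff (m - j) Ψ := fun j hj => by
      rw [Finset.mem_range] at hj
      rw [ih j hj fun k hk => h k (by lia), h (m - j) (by lia)]
    rw [coeff_logDerivSeries Φ, coeff_logDerivSeries Ψ, h (m + 1) le_rfl, hconst,
      Finset.sum_congr rfl hsum]

lemma continuousAt_coeff_logDerivSeries [TopologicalSpace K] [IsTopologicalRing K]
    [ContinuousInv₀ K] {α : Type*} [TopologicalSpace α] {Φ : α → K⟦X⟧} {a : α}
    (hΦ : ∀ k, ContinuousAt (fun y => coeff k (Φ y)) a) (ha : constantCoeff (Φ a) ≠ 0) (m : ℕ) :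
    ContinuousAt (fun y => coeff m (logDerivSeries (Φ y))) a := by
  induction m using Nat.strong_induction_on with
  | _ m ih =>
    have hconst : ContinuousAt (fun y => constantCoeff (Φ y)) a := by simpa using hΦ 0
    have hsum : ContinuousAt (fun y =>
        ∑ j ∈ Finset.range m, coeff j (logDerivSeries (Φ y)) * coeff (m - j) (Φ y)) a :=
      tendsto_finsetSum _ fun j hj => (ih j (Finset.mem_range.1 hj)).mul (hΦ _)
    simp_rw [fun y => coeff_logDerivSeries (Φ y) m]
    exact ((continuousAt_const.mul (hΦ _)).sub hsum).div hconst ha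

lemma coeff_inv_C_sub_X {a : K} (ha : a ≠ 0) (m : ℕ) :
    coeff m (C a - X : K⟦X⟧)⁻¹ = (a ^ (m + 1))⁻¹ := by
  have hinv : (C a - X : K⟦X⟧)⁻¹ = mk fun n => (a ^ (n + 1))⁻¹ := by
    rw [PowerSeries.inv_eq_iff_mul_eq_one (by simpa using ha), mul_sub]
    ext n
    rcases n with - | n
    · simp [ha]
    · rw [map_sub, coeff_mul_C, coeff_succ_mul_X, coeff_mk, coeff_mk, coeff_one]
      field_simp
      simp only [n.succ_ne_zero, if_false, mul_zero]
      ring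
  rw [hinv, coeff_mk]

lemma coeff_inv_sq_C_sub_X {a : K} (ha : a ≠ 0) (m : ℕ) :
    coeff m ((C a - X : K⟦X⟧)⁻¹ ^ 2) = (m + 1) * (a ^ (m + 2))⁻¹ := by
  have hderiv : d⁄dX K (C a - X : K⟦X⟧)⁻¹ = (C a - X : K⟦X⟧)⁻¹ ^ 2 := by simp
  rw [← hderiv, coeff_derivative, coeff_inv_C_sub_X ha, mul_comm]

lemma logDerivSeries_C_sub_X (a : K) :
    logDerivSeries (C a - X : K⟦X⟧) = -(C a - X : K⟦X⟧)⁻¹ := by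
  simp [logDerivSeries]

lemma coeff_logDerivSeries_X_sub_C {a : K} (ha : a ≠ 0) (m : ℕ) :
    coeff m (logDerivSeries (X - C a : K⟦X⟧)) = -(a ^ (m + 1))⁻¹ := by
  have hneg : (X - C a : K⟦X⟧) = C (-1) * (C a - X) := by simp
  rw [hneg, logDerivSeries_C_mul (by simp) (by simpa using ha), logDerivSeries_C_sub_X, map_neg,
    coeff_inv_C_sub_X ha]

lemma coeff_logDerivSeries_coe_of_splits {P : Polynomial K} (hP : P.Splits) (hP0 : P.eval 0 ≠ 0)
    (m : ℕ) :
    coeff m (logDerivSeries (P : K⟦X⟧)) = -(P.roots.map fun z => (z ^ (m + 1))⁻¹).sum := by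
  have hroot : ∀ z ∈ P.roots, z ≠ 0 := by
    rintro z hz rfl
    exact hP0 (Polynomial.isRoot_of_mem_roots hz)
  have hlead : P.leadingCoeff ≠ 0 := by
    rintro h
    simp [Polynomial.leadingCoeff_eq_zero.1 h] at hP0
  have hfactor : (P : K⟦X⟧) = C P.leadingCoeff * (P.roots.map fun z => X - C z).prod := by
    conv_lhs => rw [hP.eq_prod_roots]
    simp only [← Polynomial.coeToPowerSeries.ringHom_apply, map_mul, map_multiset_prod,
      Multiset.map_map, Function.comp_apply, map_sub]
    simp
  have hprod : constantCoeff (P.roots.map fun z => (X - C z : K⟦X⟧)).prod ≠ 0 := by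
    rw [map_multiset_prod, Multiset.map_map]
    exact Multiset.prod_ne_zero (by simpa using hroot 0)
  rw [hfactor, logDerivSeries_C_mul hlead hprod,
    logDerivSeries_multiset_prod _ _ fun z hz => by simpa using hroot z hz, map_multiset_sum,
    Multiset.map_map, ← Multiset.sum_map_neg', Multiset.map_map]
  exact congrArg _ (Multiset.map_congr rfl fun z hz => coeff_logDerivSeries_X_sub_C (hroot z hz) m)

end LogDerivSeries

section Lyapunov

open InnerProductSpace ComplexConjugate

lemma linearIndependent_of_diagonal_invariant {K V ι : Type*} [Field K] [AddCommGroup V]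
    [Module K V] [Fintype ι] {l : ι → K} (hl : Function.Injective l) {ξ : ι → V}
    (hξ : ∀ j, ξ j ≠ 0)
    (hinv : ∀ d, Fintype.linearCombination K ξ d = 0 → Fintype.linearCombination K ξ (l * d) = 0) :
    LinearIndependent K ξ := by
  classical
  set S := Fintype.linearCombination K ξ with hS
  set N := LinearMap.ker S
  have hsingle : ∀ j, S (Pi.single j 1) = ξ j := fun j => by
    rw [hS, Fintype.linearCombination_apply_single, one_smul]
  let D : Module.End K ((ι → K) ⧸ N) := N.mapQ N (LinearMap.mulLeft K l) hinv
  have heigen : ∀ j, D.HasEigenvector (l j) (N.mkQ (Pi.single j 1)) := fun j => by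
    refine ⟨Module.End.mem_eigenspace_iff.2 ?_, fun h => hξ j ?_⟩
    · change N.mkQ (l * Pi.single j 1) = l j • N.mkQ (Pi.single j 1)
      rw [← map_smul]
      congr 1
      ext i
      by_cases hij : i = j <;> simp [hij]
    · rwa [Submodule.mkQ_apply, Submodule.Quotient.mk_eq_zero, LinearMap.mem_ker, hsingle] at h
  have hquot := Module.End.eigenvectors_linearIndependent' D l hl _ heigen
  have hlift : ξ = N.liftQ S le_rfl ∘ fun j => N.mkQ (Pi.single j 1) :=
    funext fun j => (hsingle j).symm
  rw [hlift]
  exact hquot.map' _ (Submodule.ker_liftQ_eq_bot _ _ _ le_rfl)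

variable {𝕜 E ι : Type*} [RCLike 𝕜] [NormedAddCommGroup E] [InnerProductSpace 𝕜 E]
  {B : E →ₗ[𝕜] E} {l : ι → 𝕜} {ξ : ι → E}

lemma two_mul_inner_linearCombination_map [Fintype ι]
    (hG : ∀ j k, (l k + conj (l j)) * ⟪ξ j, ξ k⟫_𝕜 = 2 * ⟪ξ j, B (ξ k)⟫_𝕜) (c d : ι → 𝕜) :
    2 * ⟪Fintype.linearCombination 𝕜 ξ c, B (Fintype.linearCombination 𝕜 ξ d)⟫_𝕜 =
      ⟪Fintype.linearCombination 𝕜 ξ c, Fintype.linearCombination 𝕜 ξ (l * d)⟫_𝕜 +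
        ⟪Fintype.linearCombination 𝕜 ξ (l * c), Fintype.linearCombination 𝕜 ξ d⟫_𝕜 := by
  simp only [Fintype.linearCombination_apply, map_sum, map_smul, inner_sum, sum_inner,
    inner_smul_left, inner_smul_right, Finset.mul_sum, ← Finset.sum_add_distrib, Pi.mul_apply,
    map_mul]
  refine Finset.sum_congr rfl fun k _ => Finset.sum_congr rfl fun j _ => ?_
  linear_combination -(d k * conj (c j)) * hG j k

lemma linearIndependent_of_lyapunov [Finite ι] (hl : Function.Injective l) (hξ : ∀ j, ξ j ≠ 0)
    (hG : ∀ j k, (l k + conj (l j)) * ⟪ξ j, ξ k⟫_𝕜 = 2 * ⟪ξ j, B (ξ k)⟫_𝕜) :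
    LinearIndependent 𝕜 ξ := by
  have := Fintype.ofFinite ι
  refine linearIndependent_of_diagonal_invariant hl hξ fun d hd => ?_
  have h := two_mul_inner_linearCombination_map hG (l * d) d
  rw [hd, map_zero, inner_zero_right, inner_zero_right, mul_zero, add_zero] at h
  exact inner_self_eq_zero.1 h.symm

section GramSchmidt

variable [LinearOrder ι] [LocallyFiniteOrderBot ι] [WellFoundedLT ι]

lemma exists_linearCombination_eq_gramSchmidtNormed [Fintype ι] (ξ : ι → E) (k : ι) :
    ∃ c : ι → 𝕜, (∀ j, k < j → c j = 0) ∧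
      Fintype.linearCombination 𝕜 ξ c = gramSchmidtNormed 𝕜 ξ k := by
  have hmem : gramSchmidtNormed 𝕜 ξ k ∈ Submodule.span 𝕜 (ξ '' Set.Iic k) := by
    rw [← span_gramSchmidt_Iic, ← span_gramSchmidtNormed]
    exact Submodule.subset_span ⟨k, Set.self_mem_Iic, rfl⟩
  obtain ⟨c, hsupp, hc⟩ := (Finsupp.mem_span_image_iff_linearCombination 𝕜).1 hmem
  refine ⟨c, fun j hj => (Finsupp.mem_supported' 𝕜 c).1 hsupp j (by simpa using hj), ?_⟩
  rw [← hc, Fintype.linearCombination_apply, Finsupp.linearCombination_apply,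
    Finsupp.sum_fintype _ _ fun i => zero_smul 𝕜 (ξ i)]

lemma inner_gramSchmidtNormed_of_lt (ξ : ι → E) {j k : ι} (h : j < k) :
    ⟪gramSchmidtNormed 𝕜 ξ k, ξ j⟫_𝕜 = 0 := by
  rw [gramSchmidtNormed, inner_smul_left, gramSchmidt_inv_triangular 𝕜 ξ h, mul_zero]

lemma inner_gramSchmidtNormed_linearCombination_mul [Fintype ι] (l : ι → 𝕜) {c : ι → 𝕜} {k : ι}
    (hc : ∀ j, k < j → c j = 0) :
    ⟪gramSchmidtNormed 𝕜 ξ k, Fintype.linearCombination 𝕜 ξ (l * c)⟫_𝕜 =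
      l k * ⟪gramSchmidtNormed 𝕜 ξ k, Fintype.linearCombination 𝕜 ξ c⟫_𝕜 := by
  simp only [Fintype.linearCombination_apply, inner_sum, inner_smul_right, Finset.mul_sum,
    Pi.mul_apply]
  refine Finset.sum_congr rfl fun j _ => ?_
  rcases lt_trichotomy j k with hjk | rfl | hkj
  · simp [inner_gramSchmidtNormed_of_lt ξ hjk]
  · ring
  · simp [hc j hkj]

-- In the Gram–Schmidt basis the operator `ξ j ↦ l j • ξ j` is upper triangular with diagonal `l`,
-- and `hG` says that `B` compresses to its Hermitian part.
lemma re_inner_gramSchmidtNormed_map [Finite ι] (hind : LinearIndependent 𝕜 ξ)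
    (hG : ∀ j k, (l k + conj (l j)) * ⟪ξ j, ξ k⟫_𝕜 = 2 * ⟪ξ j, B (ξ k)⟫_𝕜) (k : ι) :
    RCLike.re ⟪gramSchmidtNormed 𝕜 ξ k, B (gramSchmidtNormed 𝕜 ξ k)⟫_𝕜 = RCLike.re (l k) := by
  have := Fintype.ofFinite ι
  obtain ⟨c, hc, hce⟩ := exists_linearCombination_eq_gramSchmidtNormed (𝕜 := 𝕜) ξ k
  have hdiag : ⟪gramSchmidtNormed 𝕜 ξ k, Fintype.linearCombination 𝕜 ξ (l * c)⟫_𝕜 = l k := by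
    rw [inner_gramSchmidtNormed_linearCombination_mul l hc, hce, inner_self_eq_norm_sq_to_K,
      gramSchmidtNormed_unit_length k hind, RCLike.ofReal_one, one_pow, mul_one]
  have h := two_mul_inner_linearCombination_map hG c c
  rw [hce, ← inner_conj_symm (Fintype.linearCombination 𝕜 ξ (l * c)), hdiag, RCLike.add_conj] at h
  rw [mul_left_cancel₀ two_ne_zero h, RCLike.ofReal_re]

end GramSchmidt

lemma exists_orthonormal_re_inner_map_eq [Finite ι] (hl : Function.Injective l)
    (hξ : ∀ j, ξ j ≠ 0)
    (hG : ∀ j k, (l k + conj (l j)) * ⟪ξ j, ξ k⟫_𝕜 = 2 * ⟪ξ j, B (ξ k)⟫_𝕜) :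
    ∃ e : ι → E, Orthonormal 𝕜 e ∧ ∀ k, RCLike.re ⟪e k, B (e k)⟫_𝕜 = RCLike.re (l k) := by
  let σ := Finite.equivFin ι
  have hind := (linearIndependent_of_lyapunov hl hξ hG).comp σ.symm σ.symm.injective
  refine ⟨gramSchmidtNormed 𝕜 (ξ ∘ σ.symm) ∘ σ,
    (gramSchmidtNormed_orthonormal hind).comp σ σ.injective, fun k => ?_⟩
  simpa using re_inner_gramSchmidtNormed_map (l := l ∘ σ.symm) hind (fun i j => hG _ _) (σ k)

end Lyapunov

section RootBound

open ComplexConjugate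

lemma sum_map_sum_smul_le_of_substochastic {V κ ι : Type*} [AddCommGroup V] [Module ℝ V]
    [Fintype κ] [Fintype ι] {s : Set V} {f : V → ℝ} (hf : ConvexOn ℝ s f)
    (hf0 : ∀ v ∈ s, 0 ≤ f v) {a : κ → ι → ℝ} (ha : ∀ k i, 0 ≤ a k i) (hrow : ∀ k, ∑ i, a k i = 1)
    (hcol : ∀ i, ∑ k, a k i ≤ 1) {b : ι → V} (hb : ∀ i, b i ∈ s) :
    ∑ k, f (∑ i, a k i • b i) ≤ ∑ i, f (b i) :=
  calc ∑ k, f (∑ i, a k i • b i) ≤ ∑ k, ∑ i, a k i • f (b i) :=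
        Finset.sum_le_sum fun k _ => hf.map_sum_le (fun i _ => ha k i) (hrow k) fun i _ => hb i
    _ = ∑ i, (∑ k, a k i) * f (b i) := by
        rw [Finset.sum_comm]
        simp only [smul_eq_mul, Finset.sum_mul]
    _ ≤ ∑ i, f (b i) :=
        Finset.sum_le_sum fun i _ => mul_le_of_le_one_left (hf0 _ (hb i)) (hcol i)

variable {ι : Type*} {b p : ι → ℝ}

/-- The vector with entries `√(p i) / (b i - z) ^ 2`. If `z` and `w` are zeros of
`∑ i, p i / (b i - z) ^ 2`, these vectors at `z` and `w` satisfy the Lyapunov relation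
`diagonal_gram_sqPoleVector`. -/
noncomputable def sqPoleVector (b p : ι → ℝ) (z : ℂ) : EuclideanSpace ℂ ι :=
  WithLp.toLp 2 fun i => (√(p i) : ℂ) / ((b i : ℂ) - z) ^ 2

lemma sqPoleVector_ne_zero [Nonempty ι] (hp : ∀ i, 0 < p i) {z : ℂ} (hz : ∀ i, (b i : ℂ) ≠ z) :
    sqPoleVector b p z ≠ 0 := by
  obtain ⟨i⟩ := ‹Nonempty ι›
  have hsqrt : (√(p i) : ℂ) ≠ 0 := Complex.ofReal_ne_zero.2 (Real.sqrt_pos.2 (hp i)).ne'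
  intro h
  exact div_ne_zero hsqrt (pow_ne_zero 2 (sub_ne_zero.2 (hz i)))
    (congrFun (congrArg WithLp.ofLp h) i)

lemma sub_mul_sub_div_sq_mul_sq {K : Type*} [Field K] {a x y : K} (hx : a ≠ x) (hy : a ≠ y) :
    (x - y) * ((x + y - 2 * a) / ((a - x) ^ 2 * (a - y) ^ 2)) =
      1 / (a - y) ^ 2 - 1 / (a - x) ^ 2 := by
  have hx' := sub_ne_zero.2 hx
  have hy' := sub_ne_zero.2 hy
  field_simp
  ring

variable [Fintype ι]

lemma inner_sqPoleVector_diagonal [DecidableEq ι] (hp : ∀ i, 0 ≤ p i) (z w : ℂ) :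
    (z + conj w) * inner ℂ (sqPoleVector b p w) (sqPoleVector b p z) -
        2 * inner ℂ (sqPoleVector b p w)
          ((Matrix.diagonal fun i => (b i : ℂ)).toEuclideanLin (sqPoleVector b p z)) =
      ∑ i, (p i : ℂ) * ((z + conj w - 2 * b i) /
        (((b i : ℂ) - z) ^ 2 * ((b i : ℂ) - conj w) ^ 2)) := by
  have hsqrt : ∀ i, (p i : ℂ) = √(p i) * √(p i) := fun i => by
    rw [← Complex.ofReal_mul, Real.mul_self_sqrt (hp i)]
  simp only [PiLp.inner_apply, RCLike.inner_apply, sqPoleVector, Matrix.toLpLin_apply,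
    Matrix.mulVec_diagonal, map_div₀, map_pow, map_sub, Complex.conj_ofReal, Finset.mul_sum,
    ← Finset.sum_sub_distrib, hsqrt]
  refine Finset.sum_congr rfl fun i _ => ?_
  simp only [div_eq_mul_inv, mul_inv]
  ring

lemma diagonal_gram_sqPoleVector [DecidableEq ι] (hp : ∀ i, 0 ≤ p i) {z w : ℂ} (hzw : z ≠ conj w)
    (hbz : ∀ i, (b i : ℂ) ≠ z) (hbw : ∀ i, (b i : ℂ) ≠ w)
    (hz : ∑ i, (p i : ℂ) / ((b i : ℂ) - z) ^ 2 = 0)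
    (hw : ∑ i, (p i : ℂ) / ((b i : ℂ) - w) ^ 2 = 0) :
    (z + conj w) * inner ℂ (sqPoleVector b p w) (sqPoleVector b p z) =
      2 * inner ℂ (sqPoleVector b p w)
        ((Matrix.diagonal fun i => (b i : ℂ)).toEuclideanLin (sqPoleVector b p z)) := by
  have hbw' : ∀ i, (b i : ℂ) ≠ conj w := fun i h => hbw i (by simpa using congrArg conj h)
  have hw' : ∑ i, (p i : ℂ) / ((b i : ℂ) - conj w) ^ 2 = 0 := by
    simpa using congrArg conj hw
  rw [← sub_eq_zero, inner_sqPoleVector_diagonal hp]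
  refine (mul_eq_zero.1 ?_).resolve_left (sub_ne_zero.2 hzw)
  rw [Finset.mul_sum]
  calc ∑ i, (z - conj w) * ((p i : ℂ) * ((z + conj w - 2 * b i) /
        (((b i : ℂ) - z) ^ 2 * ((b i : ℂ) - conj w) ^ 2)))
      = ∑ i, ((p i : ℂ) / ((b i : ℂ) - conj w) ^ 2 - (p i : ℂ) / ((b i : ℂ) - z) ^ 2) :=
        Finset.sum_congr rfl fun i _ => by
          rw [mul_left_comm, sub_mul_sub_div_sq_mul_sq (hbz i) (hbw' i)]
          ring
    _ = 0 := by rw [Finset.sum_sub_distrib, hz, hw', sub_zero]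

lemma re_inner_toEuclideanLin_diagonal [DecidableEq ι] (b : ι → ℝ) (u : EuclideanSpace ℂ ι) :
    RCLike.re (inner ℂ u ((Matrix.diagonal fun i => (b i : ℂ)).toEuclideanLin u)) =
      ∑ i, ‖u i‖ ^ 2 • b i := by
  simp only [PiLp.inner_apply, RCLike.inner_apply, Matrix.toLpLin_apply,
    Matrix.mulVec_diagonal, map_sum]
  refine Finset.sum_congr rfl fun i _ => ?_
  rw [mul_assoc, Complex.mul_conj, Complex.normSq_eq_norm_sq, ← Complex.ofReal_mul,
    smul_eq_mul, mul_comm]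
  exact Complex.ofReal_re _

lemma inv_norm_pow_le_inv_re_pow {z : ℂ} (hz : 0 < z.re) (m : ℕ) :
    (‖z‖ ^ m)⁻¹ ≤ (z.re ^ m)⁻¹ :=
  inv_anti₀ (pow_pos hz m) (pow_le_pow_left₀ hz.le (Complex.re_le_norm z) m)

lemma sum_inv_norm_pow_le_of_orthonormal {κ : Type*} [Fintype κ] {e : κ → EuclideanSpace ℂ ι}
    (he : Orthonormal ℂ e) (hb : ∀ i, 0 < b i) {l : κ → ℂ}
    (hl : ∀ k, (l k).re = ∑ i, ‖e k i‖ ^ 2 • b i) (m : ℕ) :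
    ∑ k, (‖l k‖ ^ m)⁻¹ ≤ ∑ i, (b i ^ m)⁻¹ := by
  have hrow : ∀ k, ∑ i, ‖e k i‖ ^ 2 = 1 := fun k => by
    rw [← EuclideanSpace.norm_sq_eq, he.1 k, one_pow]
  have hcol : ∀ i, ∑ k, ‖e k i‖ ^ 2 ≤ 1 := fun i => by
    classical
    simpa [EuclideanSpace.inner_single_right] using
      he.sum_inner_products_le (EuclideanSpace.single i (1 : ℂ)) (s := Finset.univ)
  have hre : ∀ k, 0 < (l k).re := fun k => by
    rw [hl k]
    exact (convex_Ioi (0 : ℝ)).sum_mem (fun i _ => by positivity) (hrow k) fun i _ => hb i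
  have hconv : ConvexOn ℝ (Ioi 0) fun x : ℝ => (x ^ m)⁻¹ := by
    simpa only [zpow_neg, zpow_natCast] using convexOn_zpow (𝕜 := ℝ) (-(m : ℤ))
  calc ∑ k, (‖l k‖ ^ m)⁻¹ ≤ ∑ k, ((∑ i, ‖e k i‖ ^ 2 • b i) ^ m)⁻¹ :=
        Finset.sum_le_sum fun k _ => hl k ▸ inv_norm_pow_le_inv_re_pow (hre k) m
    _ ≤ ∑ i, (b i ^ m)⁻¹ :=
        sum_map_sum_smul_le_of_substochastic hconv
          (fun x hx => inv_nonneg.2 (pow_nonneg (le_of_lt hx) m)) (fun k i => by positivity) hrow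
          hcol hb

lemma sum_inv_norm_pow_zeros_le [Nonempty ι] (hb : ∀ i, 0 < b i) (hp : ∀ i, 0 < p i) {Λ : Finset ℂ}
    (hz : ∀ z ∈ Λ, ∑ i, (p i : ℂ) / ((b i : ℂ) - z) ^ 2 = 0)
    (hconj : ∀ z ∈ Λ, ∀ w ∈ Λ, z ≠ conj w) (m : ℕ) :
    ∑ z ∈ Λ, (‖z‖ ^ m)⁻¹ ≤ ∑ i, (b i ^ m)⁻¹ := by
  classical
  have hbz : ∀ z ∈ Λ, ∀ i, (b i : ℂ) ≠ z := by
    rintro _ hzm i rfl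
    exact hconj _ hzm _ hzm (Complex.conj_ofReal _).symm
  obtain ⟨e, he, hre⟩ := exists_orthonormal_re_inner_map_eq (l := ((↑) : Λ → ℂ))
    Subtype.val_injective (fun z => sqPoleVector_ne_zero hp (hbz z z.2)) fun w z =>
      diagonal_gram_sqPoleVector (fun i => (hp i).le) (hconj z z.2 w w.2) (hbz z z.2) (hbz w w.2)
        (hz z z.2) (hz w w.2)
  rw [← Finset.sum_coe_sort]
  refine sum_inv_norm_pow_le_of_orthonormal he hb (fun z => ?_) m
  exact (hre z).symm.trans (re_inner_toEuclideanLin_diagonal b (e z))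

end RootBound

section PartialFractions

open Polynomial

lemma exists_finite_forall_nodup_roots_add_C_mul {K : Type*} [Field K] [CharZero K] {P Q : K[X]}
    (hPQ : IsCoprime P Q) :
    ∃ S : Set K, S.Finite ∧ ∀ δ ∉ S, (P + C δ * Q).roots.Nodup := by
  classical
  by_cases hW : wronskian P Q = 0
  · obtain ⟨hP, hQ⟩ := hPQ.wronskian_eq_zero_iff.1 hW
    rw [eq_C_of_derivative_eq_zero hP, eq_C_of_derivative_eq_zero hQ]
    refine ⟨∅, Set.finite_empty, fun δ _ => ?_⟩
    rw [← C_mul, ← C_add, roots_C]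
    exact Multiset.nodup_zero
  refine ⟨(fun z => -P.eval z / Q.eval z) '' {z | z ∈ (wronskian P Q).roots},
    ((wronskian P Q).roots.toFinset.finite_toSet.subset fun z hz => by simpa using hz).image _,
    fun δ hδ => Multiset.nodup_iff_count_le_one.2 fun z => ?_⟩
  by_contra! hz
  have hne : P + C δ * Q ≠ 0 := by
    intro h
    simp [h] at hz
  rw [count_roots, one_lt_rootMultiplicity_iff_isRoot hne] at hz
  have heval : P.eval z + δ * Q.eval z = 0 := by simpa using hz.1
  have hderiv : (derivative P).eval z + δ * (derivative Q).eval z = 0 := by simpa using hz.2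
  have hQz : Q.eval z ≠ 0 := by
    intro hQz
    obtain ⟨u, v, huv⟩ := hPQ
    have h := congrArg (eval z) huv
    rw [hQz, mul_zero, add_zero] at heval
    simp [heval, hQz] at h
  refine hδ ⟨z, (mem_roots hW).2 ?_, ?_⟩
  · simp only [wronskian, IsRoot.def, eval_sub, eval_mul]
    linear_combination (derivative Q).eval z * heval - Q.eval z * hderiv
  · simp only
    rw [div_eq_iff hQz]
    linear_combination -heval

variable {ι K : Type*} [Fintype ι] [Field K] {b p : ι → K}

/-- The Taylor series at `0` of the rational function `∑ i, p i / (b i - z) ^ 2`. -/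
noncomputable def sqPartialFraction (b p : ι → K) : PowerSeries K :=
  ∑ i, PowerSeries.C (p i) * (PowerSeries.C (b i) - PowerSeries.X)⁻¹ ^ 2

lemma coeff_sqPartialFraction (hb : ∀ i, b i ≠ 0) (m : ℕ) :
    PowerSeries.coeff m (sqPartialFraction b p) = (m + 1) * ∑ i, p i * (b i ^ (m + 2))⁻¹ := by
  simp only [sqPartialFraction, map_sum, PowerSeries.coeff_C_mul, coeff_inv_sq_C_sub_X (hb _),
    Finset.mul_sum]
  exact Finset.sum_congr rfl fun i _ => mul_left_comm _ _ _

lemma map_sqPartialFraction {L : Type*} [Field L] (σ : K →+* L) (hb : ∀ i, b i ≠ 0) :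
    (sqPartialFraction b p).map σ = sqPartialFraction (fun i => σ (b i)) fun i => σ (p i) := by
  ext m
  rw [PowerSeries.coeff_map, coeff_sqPartialFraction hb,
    coeff_sqPartialFraction fun i => (map_ne_zero σ).2 (hb i)]
  simp

variable [DecidableEq ι]

/-- The numerator of `∑ i, p i / (b i - z) ^ 2` over the denominator `(∏ i, (b i - z)) ^ 2`. -/
noncomputable def sqNumerator (b p : ι → K) : K[X] :=
  ∑ i, C (p i) * ∏ k ∈ Finset.univ.erase i, (C (b k) - X) ^ 2

lemma sqPartialFraction_mul_sq_prod (hb : ∀ i, b i ≠ 0) :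
    sqPartialFraction b p * (∏ i, (PowerSeries.C (b i) - PowerSeries.X)) ^ 2 =
      sqNumerator b p := by
  simp only [sqPartialFraction, sqNumerator, ← coeToPowerSeries.ringHom_apply, map_sum, map_mul,
    map_prod, map_pow, map_sub, Finset.sum_mul]
  refine Finset.sum_congr rfl fun i _ => ?_
  have hi : (PowerSeries.C (b i) - PowerSeries.X)⁻¹ * (PowerSeries.C (b i) - PowerSeries.X) = 1 :=
    PowerSeries.inv_mul_cancel _ (by simpa using hb i)
  simp only [coeToPowerSeries.ringHom_apply, coe_C, coe_X, Finset.prod_pow]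
  rw [← Finset.mul_prod_erase _ _ (Finset.mem_univ i), mul_assoc, ← mul_pow, ← mul_assoc, hi,
    one_mul]

lemma map_sqNumerator {L : Type*} [Field L] (σ : K →+* L) :
    (sqNumerator b p).map σ = sqNumerator (fun i => σ (b i)) fun i => σ (p i) := by
  simp [sqNumerator, Polynomial.map_sum, Polynomial.map_prod]

lemma eval_sqNumerator_self (b p : ι → K) (i : ι) :
    (sqNumerator b p).eval (b i) = p i * ∏ k ∈ Finset.univ.erase i, (b k - b i) ^ 2 := by
  rw [sqNumerator, eval_finsetSum, Finset.sum_eq_single i]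
  · simp [eval_prod]
  · intro j _ hji
    rw [eval_mul, eval_prod, Finset.prod_eq_zero (Finset.mem_erase.2 ⟨hji.symm, Finset.mem_univ i⟩)
      (by simp), mul_zero]
  · simp

lemma eval_sqNumerator {z : K} (hz : ∀ i, b i ≠ z) :
    (sqNumerator b p).eval z = (∏ i, (b i - z)) ^ 2 * ∑ i, p i / (b i - z) ^ 2 := by
  simp only [sqNumerator, eval_finsetSum, eval_mul, eval_prod, eval_pow, eval_sub, eval_C, eval_X,
    Finset.mul_sum, Finset.prod_pow]
  refine Finset.sum_congr rfl fun i _ => ?_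
  rw [← Finset.mul_prod_erase _ _ (Finset.mem_univ i)]
  field_simp [sub_ne_zero.2 (hz i)]

lemma coeff_logDerivSeries_sqPartialFraction [IsAlgClosed K] (hb : ∀ i, b i ≠ 0)
    (hF : PowerSeries.constantCoeff (sqPartialFraction b p) ≠ 0) (m : ℕ) :
    PowerSeries.coeff m (logDerivSeries (sqPartialFraction b p)) =
      2 * ∑ i, (b i ^ (m + 1))⁻¹ -
        ((sqNumerator b p).roots.map fun z => (z ^ (m + 1))⁻¹).sum := by
  set D : PowerSeries K := ∏ i, (PowerSeries.C (b i) - PowerSeries.X) with hDdef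
  have hD : PowerSeries.constantCoeff D ≠ 0 := by
    simpa [D, map_prod, Finset.prod_ne_zero_iff] using hb
  have hlogD : PowerSeries.coeff m (logDerivSeries D) = -∑ i, (b i ^ (m + 1))⁻¹ := by
    rw [hDdef, Finset.prod, logDerivSeries_multiset_prod _ _ fun i _ => by simpa using hb i]
    change PowerSeries.coeff m
      (∑ i, logDerivSeries (PowerSeries.C (b i) - PowerSeries.X : PowerSeries K)) = _
    simp only [logDerivSeries_C_sub_X, map_sum, map_neg, coeff_inv_C_sub_X (hb _),
      Finset.sum_neg_distrib]
  have hmul := sqPartialFraction_mul_sq_prod (p := p) hb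
  have hN0 : (sqNumerator b p).eval 0 ≠ 0 := by
    rw [← coeff_zero_eq_eval_zero, ← Polynomial.coeff_coe, ← hmul,
      PowerSeries.coeff_zero_eq_constantCoeff_apply, map_mul, map_pow]
    exact mul_ne_zero hF (pow_ne_zero 2 hD)
  have hlog := coeff_logDerivSeries_coe_of_splits (IsAlgClosed.splits (sqNumerator b p)) hN0 m
  rw [← hmul, sq, logDerivSeries_mul hF (by rw [map_mul]; exact mul_ne_zero hD hD),
    logDerivSeries_mul hD hD, map_add, map_add, hlogD] at hlog
  linear_combination hlog

lemma isCoprime_C_sub_X {P : K[X]} {a : K} (h : P.eval a ≠ 0) : IsCoprime P (C a - X) := by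
  rw [← neg_sub, IsCoprime.neg_right_iff, isCoprime_comm,
    (irreducible_X_sub_C a).coprime_iff_not_dvd, dvd_iff_isRoot]
  exact h

lemma isCoprime_sqNumerator_prod_erase (hb : Function.Injective b) (hp : ∀ i, p i ≠ 0) (i : ι) :
    IsCoprime (sqNumerator b p) (∏ k ∈ Finset.univ.erase i, (C (b k) - X) ^ 2) := by
  refine IsCoprime.prod_right fun k _ => (isCoprime_C_sub_X ?_).pow_right
  rw [eval_sqNumerator_self]
  refine mul_ne_zero (hp k) (Finset.prod_ne_zero_iff.2 fun j hj => pow_ne_zero 2 ?_)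
  exact sub_ne_zero.2 (hb.ne (Finset.ne_of_mem_erase hj))

lemma sqNumerator_add_single (b p : ι → K) (i : ι) (δ : K) :
    sqNumerator b (p + Pi.single i δ) =
      sqNumerator b p + C δ * ∏ k ∈ Finset.univ.erase i, (C (b k) - X) ^ 2 := by
  simp only [sqNumerator, Pi.add_apply, map_add, add_mul, Finset.sum_add_distrib]
  congr 1
  rw [Finset.sum_eq_single i (fun j _ hji => by simp [hji]) (by simp), Pi.single_eq_same]

end PartialFractions

section RealPartialFractions

variable {ι : Type*} [Fintype ι] [Nonempty ι] {b p : ι → ℝ}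

lemma eval_sqNumerator_pos [DecidableEq ι] (hb : Function.Injective b) (hp : ∀ i, 0 < p i) (x : ℝ) :
    0 < (sqNumerator b p).eval x := by
  obtain ⟨i, hi⟩ : ∃ i, ∀ k, k ≠ i → b k ≠ x := by
    by_cases hx : ∃ i, b i = x
    · obtain ⟨i, rfl⟩ := hx
      exact ⟨i, fun k hk => hb.ne hk⟩
    · exact ⟨Classical.arbitrary ι, fun k _ h => hx ⟨k, h⟩⟩
  simp only [sqNumerator, Polynomial.eval_finsetSum, Polynomial.eval_mul, Polynomial.eval_prod,
    Polynomial.eval_pow, Polynomial.eval_sub, Polynomial.eval_C, Polynomial.eval_X]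
  refine Finset.sum_pos' (fun j _ => mul_nonneg (hp j).le (Finset.prod_nonneg fun k _ =>
    sq_nonneg _)) ⟨i, Finset.mem_univ i, mul_pos (hp i) (Finset.prod_pos fun k hk => ?_)⟩
  exact pow_two_pos_of_ne_zero (sub_ne_zero.2 (hi k (Finset.ne_of_mem_erase hk)))

lemma im_ne_zero_of_mem_roots_sqNumerator [DecidableEq ι] (hb : Function.Injective b)
    (hp : ∀ i, 0 < p i) {z : ℂ}
    (hz : z ∈ (sqNumerator (fun i => (b i : ℂ)) fun i => (p i : ℂ)).roots) : z.im ≠ 0 := by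
  intro him
  have hzre : Complex.ofRealHom z.re = z := Complex.ext rfl him.symm
  have hroot : (sqNumerator (fun i => Complex.ofRealHom (b i))
    fun i => Complex.ofRealHom (p i)).eval z = 0 := Polynomial.isRoot_of_mem_roots hz
  rw [← map_sqNumerator, ← hzre, Polynomial.eval_map_apply, map_eq_zero] at hroot
  exact (eval_sqNumerator_pos hb hp z.re).ne' hroot

lemma sum_eq_zero_of_mem_roots_sqNumerator [DecidableEq ι] (hb : Function.Injective b)
    (hp : ∀ i, 0 < p i) {z : ℂ}
    (hz : z ∈ (sqNumerator (fun i => (b i : ℂ)) fun i => (p i : ℂ)).roots) :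
    ∑ i, (p i : ℂ) / ((b i : ℂ) - z) ^ 2 = 0 := by
  have hbz : ∀ i, (b i : ℂ) ≠ z := by
    rintro i rfl
    exact im_ne_zero_of_mem_roots_sqNumerator hb hp hz (Complex.ofReal_im _)
  have hroot := Polynomial.isRoot_of_mem_roots hz
  rw [Polynomial.IsRoot.def, eval_sqNumerator hbz] at hroot
  refine (mul_eq_zero.1 hroot).resolve_left (pow_ne_zero 2 ?_)
  exact Finset.prod_ne_zero_iff.2 fun i _ => sub_ne_zero.2 (hbz i)

-- The non-real zeros come in conjugate pairs, and the zeros in each open half-plane meet the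
-- hypotheses of `sum_inv_norm_pow_zeros_le`; hence the factor `2`.
lemma sum_inv_norm_pow_roots_sqNumerator_le [DecidableEq ι] (hb0 : ∀ i, 0 < b i)
    (hb : Function.Injective b) (hp : ∀ i, 0 < p i)
    (hroots : (sqNumerator (fun i => (b i : ℂ)) fun i => (p i : ℂ)).roots.Nodup) (m : ℕ) :
    ((sqNumerator (fun i => (b i : ℂ)) fun i => (p i : ℂ)).roots.map fun z => (‖z‖ ^ m)⁻¹).sum ≤
      2 * ∑ i, (b i ^ m)⁻¹ := by
  let Λ : Finset ℂ := ⟨_, hroots⟩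
  have him : ∀ z ∈ Λ, z.im ≠ 0 := fun z => im_ne_zero_of_mem_roots_sqNumerator hb hp
  have hzero : ∀ z ∈ Λ, ∑ i, (p i : ℂ) / ((b i : ℂ) - z) ^ 2 = 0 :=
    fun z => sum_eq_zero_of_mem_roots_sqNumerator hb hp
  have hupper : ∑ z ∈ Λ with 0 < z.im, (‖z‖ ^ m)⁻¹ ≤ ∑ i, (b i ^ m)⁻¹ := by
    refine sum_inv_norm_pow_zeros_le hb0 hp (fun z hz => hzero z (Finset.mem_filter.1 hz).1) ?_ m
    rintro z hz w hw rfl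
    have hneg : 0 < -w.im := by simpa using (Finset.mem_filter.1 hz).2
    linarith [(Finset.mem_filter.1 hw).2]
  have hlower : ∑ z ∈ Λ with ¬ 0 < z.im, (‖z‖ ^ m)⁻¹ ≤ ∑ i, (b i ^ m)⁻¹ := by
    refine sum_inv_norm_pow_zeros_le hb0 hp (fun z hz => hzero z (Finset.mem_filter.1 hz).1) ?_ m
    rintro z hz w hw rfl
    have hneg : ¬ 0 < -w.im := by simpa using (Finset.mem_filter.1 hz).2
    exact him w (Finset.mem_filter.1 hw).1 (by linarith [(Finset.mem_filter.1 hw).2])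
  calc ∑ z ∈ Λ, (‖z‖ ^ m)⁻¹
      = ∑ z ∈ Λ with 0 < z.im, (‖z‖ ^ m)⁻¹ + ∑ z ∈ Λ with ¬ 0 < z.im, (‖z‖ ^ m)⁻¹ :=
        (Finset.sum_filter_add_sum_filter_not Λ _ _).symm
    _ ≤ 2 * ∑ i, (b i ^ m)⁻¹ := by linarith

lemma constantCoeff_sqPartialFraction_pos (hb : ∀ i, 0 < b i) (hp : ∀ i, 0 < p i) :
    0 < PowerSeries.constantCoeff (sqPartialFraction b p) := by
  rw [← PowerSeries.coeff_zero_eq_constantCoeff_apply, coeff_sqPartialFraction fun i => (hb i).ne']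
  refine mul_pos (by simp) (Finset.sum_pos (fun i _ => ?_) Finset.univ_nonempty)
  exact mul_pos (hp i) (inv_pos.2 (pow_pos (hb i) _))

lemma coeff_logDerivSeries_sqPartialFraction_nonneg_of_nodup [DecidableEq ι] (hb0 : ∀ i, 0 < b i)
    (hb : Function.Injective b) (hp : ∀ i, 0 < p i)
    (hroots : (sqNumerator (fun i => (b i : ℂ)) fun i => (p i : ℂ)).roots.Nodup) (m : ℕ) :
    0 ≤ PowerSeries.coeff m (logDerivSeries (sqPartialFraction b p)) := by
  set R := (sqNumerator (fun i => (b i : ℂ)) fun i => (p i : ℂ)).roots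
  have hmap : (sqPartialFraction b p).map Complex.ofRealHom =
      sqPartialFraction (fun i => (b i : ℂ)) fun i => (p i : ℂ) :=
    map_sqPartialFraction Complex.ofRealHom fun i => (hb0 i).ne'
  have hconst : PowerSeries.constantCoeff
      (sqPartialFraction (fun i => (b i : ℂ)) fun i => (p i : ℂ)) ≠ 0 := by
    rw [← hmap, ← PowerSeries.coeff_zero_eq_constantCoeff_apply, PowerSeries.coeff_map,
      PowerSeries.coeff_zero_eq_constantCoeff_apply, map_ne_zero]
    exact (constantCoeff_sqPartialFraction_pos hb0 hp).ne'
  have hcoeff : ((PowerSeries.coeff m (logDerivSeries (sqPartialFraction b p)) : ℝ) : ℂ) =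
      ((2 * ∑ i, (b i ^ (m + 1))⁻¹ : ℝ) : ℂ) - (R.map fun z => (z ^ (m + 1))⁻¹).sum := by
    have h := coeff_logDerivSeries_sqPartialFraction
      (fun i => Complex.ofReal_ne_zero.2 (hb0 i).ne') hconst m
    rw [← hmap, ← map_logDerivSeries, PowerSeries.coeff_map, Complex.ofRealHom_eq_coe] at h
    rw [h]
    push_cast
    rfl
  have hsum : ‖(R.map fun z => (z ^ (m + 1))⁻¹).sum‖ ≤ 2 * ∑ i, (b i ^ (m + 1))⁻¹ := by
    refine (norm_multiset_sum_le _).trans ?_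
    simpa [Multiset.map_map] using
      sum_inv_norm_pow_roots_sqNumerator_le hb0 hb hp hroots (m + 1)
  have hre := congrArg Complex.re hcoeff
  rw [Complex.ofReal_re, Complex.sub_re, Complex.ofReal_re] at hre
  linarith [Complex.re_le_norm (R.map fun z => (z ^ (m + 1))⁻¹).sum]

-- Multiple zeros are avoided by increasing one of the weights slightly.
lemma coeff_logDerivSeries_sqPartialFraction_nonneg (hb0 : ∀ i, 0 < b i)
    (hb : Function.Injective b) (hp : ∀ i, 0 < p i) (m : ℕ) :
    0 ≤ PowerSeries.coeff m (logDerivSeries (sqPartialFraction b p)) := by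
  classical
  let i₀ := Classical.arbitrary ι
  obtain ⟨S, hS, hnodup⟩ := exists_finite_forall_nodup_roots_add_C_mul
    (isCoprime_sqNumerator_prod_erase (b := fun i => (b i : ℂ)) (p := fun i => (p i : ℂ))
      (Complex.ofReal_injective.comp hb) (fun i => Complex.ofReal_ne_zero.2 (hp i).ne') i₀)
  let q : ℝ → ι → ℝ := fun δ => p + Pi.single i₀ δ
  have hq0 : q 0 = p := by simp [q]
  have hcont : ContinuousAt
      (fun δ => PowerSeries.coeff m (logDerivSeries (sqPartialFraction b (q δ)))) 0 := by
    refine continuousAt_coeff_logDerivSeries (fun k => Continuous.continuousAt ?_) ?_ m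
    · have hq : Continuous q := continuous_const.add (continuous_single (A := fun _ => ℝ) i₀)
      simp only [coeff_sqPartialFraction fun i => (hb0 i).ne']
      fun_prop
    · rw [hq0]
      exact (constantCoeff_sqPartialFraction_pos hb0 hp).ne'
  have hgeneric : ∀ᶠ δ : ℝ in nhdsWithin 0 (Ioi 0), (δ : ℂ) ∉ S :=
    (nhdsGT_le_nhdsNE 0).trans (nhdsNE_le_cofinite 0)
      (hS.preimage Complex.ofReal_injective.injOn).eventually_cofinite_notMem
  have hlim := hcont.tendsto.mono_left (nhdsWithin_le_nhds (s := Ioi 0))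
  simp only [hq0] at hlim
  refine ge_of_tendsto hlim ?_
  filter_upwards [hgeneric, self_mem_nhdsWithin] with δ hδS hδ
  refine coeff_logDerivSeries_sqPartialFraction_nonneg_of_nodup hb0 hb (fun i => ?_) ?_ m
  · exact add_pos_of_pos_of_nonneg (hp i) ((Pi.single_nonneg.2 (le_of_lt hδ) :
      (0 : ι → ℝ) ≤ Pi.single i₀ δ) i)
  · have hqC : (fun i => (q δ i : ℂ)) = (fun i => (p i : ℂ)) + Pi.single i₀ (δ : ℂ) := by
      ext i
      by_cases hi : i = i₀ <;> simp [q, hi]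
    rw [hqC, sqNumerator_add_single]
    exact hnodup δ hδS

end RealPartialFractions

section Moments

open PowerSeries

/-- The Taylor series at `0` of `z ↦ ∫ (1 - u z)⁻² dκ(u)`. -/
noncomputable def sqMomentSeries (κ : Measure ℝ) : ℝ⟦X⟧ :=
  mk fun k => (k + 1) * ∫ u, u ^ k ∂κ

/-- The polynomial of degree `< n` with coefficient vector `v`, as a power series. -/
noncomputable def truncatedSeries {n : ℕ} (v : Fin n → ℝ) : ℝ⟦X⟧ :=
  mk fun k => if h : k < n then v ⟨k, h⟩ else 0

/-- The first `n` Taylor coefficients at `0` of `z ↦ (1 - u z)⁻²`. -/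
def sqGeometricVector (n : ℕ) (u : ℝ) : Fin n → ℝ := fun k => (k + 1) * u ^ (k : ℕ)

variable {m : ℕ}

lemma coeff_truncatedSeries {n : ℕ} (v : Fin n → ℝ) {k : ℕ} (hk : k < n) :
    coeff k (truncatedSeries v) = v ⟨k, hk⟩ := by
  rw [truncatedSeries, coeff_mk, dif_pos hk]

lemma continuous_coeff_truncatedSeries (n k : ℕ) :
    Continuous fun v : Fin n → ℝ => coeff k (truncatedSeries v) := by
  simp only [truncatedSeries, coeff_mk]
  split_ifs <;> fun_prop

lemma coeff_logDerivSeries_nonneg_of_mem_convexHull {v : Fin (m + 2) → ℝ}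
    (hv : v ∈ convexHull ℝ (sqGeometricVector (m + 2) '' Ioi 0)) :
    v 0 = 1 ∧ 0 ≤ coeff m (logDerivSeries (truncatedSeries v)) := by
  obtain ⟨ι, _, z, w, hz, haff, hw, hw1, hsum⟩ := eq_pos_convex_span_of_mem_convexHull hv
  have : Nonempty ι := Finset.univ_nonempty_iff.1
    (Finset.nonempty_of_sum_ne_zero (hw1.trans_ne one_ne_zero))
  choose u hu huz using fun i => hz ⟨i, rfl⟩
  have hinj : Function.Injective u := fun i j hij => haff.injective (by rw [← huz, ← huz, hij])
  have hv' : ∀ k : Fin (m + 2), v k = (k + 1) * ∑ i, w i * u i ^ (k : ℕ) := fun k => by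
    simp only [← hsum, ← huz, sqGeometricVector, Finset.sum_apply, Pi.smul_apply, smul_eq_mul,
      Finset.mul_sum]
    exact Finset.sum_congr rfl fun i _ => mul_left_comm _ _ _
  refine ⟨by simpa [hw1] using hv' 0, ?_⟩
  have hu0 : ∀ i, (u i)⁻¹ ≠ 0 := fun i => (inv_pos.2 (hu i)).ne'
  rw [coeff_logDerivSeries_congr
    (Ψ := sqPartialFraction (fun i => (u i)⁻¹) fun i => w i * (u i)⁻¹ ^ 2) fun k hk => ?_]
  · exact coeff_logDerivSeries_sqPartialFraction_nonneg (fun i => inv_pos.2 (hu i))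
      (inv_injective.comp hinj) (fun i => mul_pos (hw i) (pow_pos (inv_pos.2 (hu i)) 2)) m
  · rw [coeff_truncatedSeries v (Nat.lt_succ_of_le hk), hv', coeff_sqPartialFraction hu0]
    congr 1
    refine Finset.sum_congr rfl fun i _ => ?_
    have hui : u i ≠ 0 := (hu i).ne'
    rw [inv_pow, inv_pow, inv_inv]
    field_simp
    ring

lemma coeff_logDerivSeries_nonneg_of_mem_closure_convexHull {v : Fin (m + 2) → ℝ}
    (hv : v ∈ closure (convexHull ℝ (sqGeometricVector (m + 2) '' Ioi 0))) :
    v 0 = 1 ∧ 0 ≤ coeff m (logDerivSeries (truncatedSeries v)) := by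
  have hcont : ContinuousOn
      (fun v : Fin (m + 2) → ℝ => coeff m (logDerivSeries (truncatedSeries v)))
      {v | v 0 = 1} := fun v hv => by
    refine (continuousAt_coeff_logDerivSeries
      (fun k => (continuous_coeff_truncatedSeries _ k).continuousAt) ?_ m).continuousWithinAt
    rw [← coeff_zero_eq_constantCoeff_apply, coeff_truncatedSeries v (Nat.succ_pos _)]
    exact (hv : v 0 = 1).trans_ne one_ne_zero
  have hclosed := hcont.preimage_isClosed_of_isClosed
    (isClosed_eq (continuous_apply 0) continuous_const) (isClosed_Ici (a := (0 : ℝ)))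
  exact closure_minimal (fun v hv => coeff_logDerivSeries_nonneg_of_mem_convexHull hv) hclosed hv

lemma sqGeometricVector_mem_closure_convexHull (n : ℕ) {u : ℝ} (hu : 0 ≤ u) :
    sqGeometricVector n u ∈ closure (convexHull ℝ (sqGeometricVector n '' Ioi 0)) := by
  have hcont : Continuous (sqGeometricVector n) := by
    unfold sqGeometricVector
    fun_prop
  have hmem : u ∈ closure (Ioi (0 : ℝ)) := by rwa [closure_Ioi]
  exact closure_mono (subset_convexHull ℝ _)
    (image_closure_subset_closure_image hcont ⟨u, hmem, rfl⟩)

lemma constantCoeff_sqMomentSeries (κ : Measure ℝ) :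
    constantCoeff (sqMomentSeries κ) = κ.real univ := by
  rw [← coeff_zero_eq_constantCoeff_apply, sqMomentSeries, coeff_mk]
  simp

theorem coeff_logDerivSeries_sqMomentSeries_nonneg {κ : Measure ℝ} [IsFiniteMeasure κ] [NeZero κ]
    (hκ : ∀ᵐ u ∂κ, 0 ≤ u) (hint : ∀ k : ℕ, Integrable (fun u => u ^ k) κ) (m : ℕ) :
    0 ≤ coeff m (logDerivSeries (sqMomentSeries κ)) := by
  have hint' : ∀ k : Fin (m + 2), Integrable (fun u => sqGeometricVector (m + 2) u k) κ :=
    fun k => (hint k).const_mul _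
  set v := ⨍ u, sqGeometricVector (m + 2) u ∂κ with hv
  have hmem : v ∈ closure (convexHull ℝ (sqGeometricVector (m + 2) '' Ioi 0)) :=
    (convex_convexHull ℝ _).closure.average_mem isClosed_closure
      (hκ.mono fun u => sqGeometricVector_mem_closure_convexHull (m + 2)) (Integrable.of_eval hint')
  obtain ⟨hv0, hnonneg⟩ := coeff_logDerivSeries_nonneg_of_mem_closure_convexHull hmem
  have hmass : κ.real univ ≠ 0 := measureReal_univ_ne_zero
  have hconst : constantCoeff (truncatedSeries v) ≠ 0 := by
    rw [← coeff_zero_eq_constantCoeff_apply, coeff_truncatedSeries v (Nat.succ_pos _)]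
    exact hv0.trans_ne one_ne_zero
  rw [← logDerivSeries_C_mul hmass hconst] at hnonneg
  refine hnonneg.trans_eq (coeff_logDerivSeries_congr fun k hk => ?_)
  rw [coeff_C_mul, coeff_truncatedSeries v (Nat.lt_succ_of_le hk), sqMomentSeries, coeff_mk, hv,
    average_eq, Pi.smul_apply, smul_eq_mul, mul_inv_cancel_left₀ hmass, eval_integral hint']
  exact integral_const_mul _ _

end Moments

section TaylorSeries

open PowerSeries

open scoped Nat Topology

/-- The Taylor series at `0` of `t ↦ f (x - t)`. Reflecting the variable makes complete monotonicity
of `f` the statement that these series have nonnegative coefficients. -/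
noncomputable def reflectedTaylorSeries (f : ℝ → ℝ) (x : ℝ) : ℝ⟦X⟧ :=
  mk fun k => (-1) ^ k * iteratedDeriv k f x / k !

variable {f g : ℝ → ℝ} {x : ℝ}

lemma constantCoeff_reflectedTaylorSeries (f : ℝ → ℝ) (x : ℝ) :
    constantCoeff (reflectedTaylorSeries f x) = f x := by
  simp [reflectedTaylorSeries, ← coeff_zero_eq_constantCoeff_apply]

lemma reflectedTaylorSeries_congr (h : f =ᶠ[𝓝 x] g) :
    reflectedTaylorSeries f x = reflectedTaylorSeries g x := by
  ext k
  simp only [reflectedTaylorSeries, coeff_mk, h.iteratedDeriv_eq k]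

lemma reflectedTaylorSeries_mul (hf : ContDiffAt ℝ (⊤ : ℕ∞) f x) (hg : ContDiffAt ℝ (⊤ : ℕ∞) g x) :
    reflectedTaylorSeries (fun y => f y * g y) x =
      reflectedTaylorSeries f x * reflectedTaylorSeries g x := by
  ext k
  rw [coeff_mul, Finset.Nat.sum_antidiagonal_eq_sum_range_succ_mk]
  simp only [reflectedTaylorSeries, coeff_mk]
  rw [iteratedDeriv_fun_mul (hf.of_le (by exact_mod_cast le_top))
    (hg.of_le (by exact_mod_cast le_top)), Finset.mul_sum, Finset.sum_div]
  refine Finset.sum_congr rfl fun j hj => ?_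
  have hjk : j ≤ k := Nat.lt_succ_iff.1 (Finset.mem_range.1 hj)
  rw [Nat.cast_choose ℝ hjk, ← Nat.add_sub_of_le hjk, pow_add, Nat.add_sub_cancel_left]
  field_simp [Nat.factorial_ne_zero]

lemma reflectedTaylorSeries_neg_deriv (f : ℝ → ℝ) (x : ℝ) :
    reflectedTaylorSeries (fun y => -deriv f y) x = d⁄dX ℝ (reflectedTaylorSeries f x) := by
  ext k
  rw [coeff_derivative]
  simp only [reflectedTaylorSeries, coeff_mk, iteratedDeriv_fun_neg, ← iteratedDeriv_succ',
    Nat.factorial_succ, Nat.cast_mul, Nat.cast_succ]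
  field_simp
  ring

lemma contDiffAt_neg_deriv_div (hf : ContDiffAt ℝ (⊤ : ℕ∞) f x) (hx : f x ≠ 0) :
    ContDiffAt ℝ (⊤ : ℕ∞) (fun y => -deriv f y / f y) x :=
  (hf.derivWithin le_rfl).neg.div hf hx

lemma logDerivSeries_reflectedTaylorSeries (hf : ContDiffAt ℝ (⊤ : ℕ∞) f x) (hx : f x ≠ 0) :
    logDerivSeries (reflectedTaylorSeries f x) =
      reflectedTaylorSeries (fun y => -deriv f y / f y) x := by
  refine logDerivSeries_eq_of_mul_eq (by rwa [constantCoeff_reflectedTaylorSeries]) ?_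
  rw [← reflectedTaylorSeries_mul (contDiffAt_neg_deriv_div hf hx) hf,
    ← reflectedTaylorSeries_neg_deriv]
  refine reflectedTaylorSeries_congr ?_
  filter_upwards [hf.continuousAt.eventually_ne hx] with y hy using div_mul_cancel₀ _ hy

theorem logCompletelyMonotonic_of_coeff_logDerivSeries_nonneg (hpos : ∀ x, 0 < x → 0 < f x)
    (hf : ∀ x, 0 < x → ContDiffAt ℝ (⊤ : ℕ∞) f x)
    (hcoeff : ∀ x, 0 < x → ∀ n, 0 ≤ coeff n (logDerivSeries (reflectedTaylorSeries f x))) :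
    LogCompletelyMonotonic f := by
  refine ⟨hpos, hf, fun x hx => contDiffAt_neg_deriv_div (hf x hx) (hpos x hx).ne',
    fun n x hx => ?_⟩
  have hn := hcoeff x hx n
  rw [logDerivSeries_reflectedTaylorSeries (hf x hx) (hpos x hx).ne', reflectedTaylorSeries,
    coeff_mk] at hn
  exact nonneg_of_mul_nonneg_left hn (inv_pos.2 (Nat.cast_pos.2 n.factorial_pos))

end TaylorSeries

section StieltjesTransform

/-- The Stieltjes transform of `μ` of integer order `n`. -/
noncomputable def stieltjesTransform (n : ℕ) (μ : Measure ℝ) (x : ℝ) : ℝ :=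
  ∫ t, ((x + t) ^ n)⁻¹ ∂μ

variable {μ : Measure ℝ} {n : ℕ} {x : ℝ}

lemma integrable_inv_add_pow_of_le (hμ : ∀ᵐ t ∂μ, 0 ≤ t) (hx : 0 < x)
    (hint : Integrable (fun t => ((x + t) ^ n)⁻¹) μ) {m : ℕ} (hnm : n ≤ m) :
    Integrable (fun t => ((x + t) ^ m)⁻¹) μ := by
  obtain ⟨k, rfl⟩ := Nat.exists_eq_add_of_le hnm
  refine (hint.mul_const (x ^ k)⁻¹).mono' (by fun_prop) ?_
  filter_upwards [hμ] with t ht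
  rw [Real.norm_of_nonneg (by positivity), pow_add, mul_inv]
  gcongr
  linarith

lemma hasDerivAt_stieltjesTransform (hμ : ∀ᵐ t ∂μ, 0 ≤ t)
    (hint : ∀ y, 0 < y → Integrable (fun t => ((y + t) ^ n)⁻¹) μ) (hx : 0 < x) :
    HasDerivAt (stieltjesTransform n μ) (-n * stieltjesTransform (n + 1) μ x) x := by
  have hint' : Integrable (fun t => ((x / 2 + t) ^ (n + 1))⁻¹) μ :=
    integrable_inv_add_pow_of_le hμ (half_pos hx) (hint _ (half_pos hx)) n.le_succ
  have hbound : ∀ᵐ t ∂μ, ∀ y ∈ Ioi (x / 2),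
      ‖-(n : ℝ) * ((y + t) ^ (n + 1))⁻¹‖ ≤ n * ((x / 2 + t) ^ (n + 1))⁻¹ := by
    filter_upwards [hμ] with t ht y hy
    have hy' : x / 2 < y := hy
    have hyt : 0 < y + t := by linarith
    rw [norm_mul, norm_neg, Real.norm_of_nonneg n.cast_nonneg, Real.norm_of_nonneg (by positivity)]
    gcongr
  have hderiv : ∀ᵐ t ∂μ, ∀ y ∈ Ioi (x / 2),
      HasDerivAt (fun y => ((y + t) ^ n)⁻¹) (-(n : ℝ) * ((y + t) ^ (n + 1))⁻¹) y := by
    filter_upwards [hμ] with t ht y hy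
    have hy' : x / 2 < y := hy
    have hyt : y + t ≠ 0 := by linarith
    have := (hasDerivAt_zpow (-n : ℤ) (y + t) (Or.inl hyt)).comp_add_const y t
    have hexp : (-n : ℤ) - 1 = -((n + 1 : ℕ) : ℤ) := by push_cast; ring
    rw [hexp] at this
    simpa only [zpow_neg, zpow_natCast, Int.cast_neg, Int.cast_natCast] using this
  have := (hasDerivAt_integral_of_dominated_loc_of_deriv_le
    (Ioi_mem_nhds (half_lt_self hx)) (Eventually.of_forall fun y => by fun_prop) (hint x hx)
    (by fun_prop) hbound (hint'.const_mul _) hderiv).2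
  rwa [integral_const_mul] at this

lemma contDiffOn_stieltjesTransform (hμ : ∀ᵐ t ∂μ, 0 ≤ t)
    (hint : ∀ y, 0 < y → Integrable (fun t => ((y + t) ^ n)⁻¹) μ) (k : ℕ) :
    ContDiffOn ℝ k (stieltjesTransform n μ) (Ioi 0) := by
  induction k generalizing n with
  | zero =>
    exact contDiffOn_zero.2 fun x hx =>
      (hasDerivAt_stieltjesTransform hμ hint hx).continuousAt.continuousWithinAt
  | succ k ih =>
    rw [Nat.cast_succ, contDiffOn_succ_iff_deriv_of_isOpen isOpen_Ioi]
    refine ⟨fun x hx =>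
      (hasDerivAt_stieltjesTransform hμ hint hx).differentiableAt.differentiableWithinAt,
      by simp, ?_⟩
    refine ((contDiffOn_const (c := -(n : ℝ))).mul (ih (n := n + 1) fun y hy =>
      integrable_inv_add_pow_of_le hμ hy (hint y hy) n.le_succ)).congr fun x hx => ?_
    exact (hasDerivAt_stieltjesTransform hμ hint hx).deriv

lemma contDiffAt_stieltjesTransform (hμ : ∀ᵐ t ∂μ, 0 ≤ t)
    (hint : ∀ y, 0 < y → Integrable (fun t => ((y + t) ^ n)⁻¹) μ) (hx : 0 < x) :
    ContDiffAt ℝ (⊤ : ℕ∞) (stieltjesTransform n μ) x :=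
  (contDiffOn_infty.2 fun k => contDiffOn_stieltjesTransform hμ hint k).contDiffAt
    (Ioi_mem_nhds hx)

lemma iteratedDeriv_stieltjesTransform (hμ : ∀ᵐ t ∂μ, 0 ≤ t)
    (hint : ∀ y, 0 < y → Integrable (fun t => ((y + t) ^ n)⁻¹) μ) (hx : 0 < x) (k : ℕ) :
    iteratedDeriv k (stieltjesTransform n μ) x =
      (-1) ^ k * n.ascFactorial k * stieltjesTransform (n + k) μ x := by
  induction k generalizing x with
  | zero => simp
  | succ k ih =>
    have hlocal : iteratedDeriv k (stieltjesTransform n μ) =ᶠ[nhds x]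
        fun y => (-1) ^ k * n.ascFactorial k * stieltjesTransform (n + k) μ y := by
      filter_upwards [Ioi_mem_nhds hx] with y hy using ih hy
    have hderiv := hasDerivAt_stieltjesTransform hμ
      (fun y hy => integrable_inv_add_pow_of_le hμ hy (hint y hy) (n.le_add_right k)) hx
    rw [iteratedDeriv_succ, hlocal.deriv_eq, (hderiv.const_mul _).deriv, Nat.ascFactorial_succ,
      ← add_assoc]
    push_cast
    ring

end StieltjesTransform

section StieltjesOrderTwo

open PowerSeries

/-- The image under `t ↦ (x + t)⁻¹` of the measure `(x + t)⁻² dμ(t)`. Its `k`-th moment is the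
Stieltjes transform of `μ` of order `k + 2` at `x`. -/
noncomputable def reciprocalMeasure (μ : Measure ℝ) (x : ℝ) : Measure ℝ :=
  (μ.withDensity fun t => ENNReal.ofReal ((x + t) ^ 2)⁻¹).map fun t => (x + t)⁻¹

variable {μ : Measure ℝ} {x : ℝ}

lemma integrable_reciprocalMeasure_iff {F : ℝ → ℝ} (hF : Measurable F) :
    Integrable F (reciprocalMeasure μ x) ↔
      Integrable (fun t => ((x + t) ^ 2)⁻¹ * F (x + t)⁻¹) μ := by
  rw [reciprocalMeasure, integrable_map_measure hF.aestronglyMeasurable (by fun_prop),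
    integrable_withDensity_iff_integrable_smul' (by fun_prop) (by simp)]
  refine integrable_congr (Eventually.of_forall fun t => ?_)
  simp only [ENNReal.toReal_ofReal (inv_nonneg.2 (sq_nonneg (x + t))), smul_eq_mul,
    Function.comp_apply]

lemma integral_reciprocalMeasure {F : ℝ → ℝ} (hF : Measurable F) :
    ∫ u, F u ∂reciprocalMeasure μ x = ∫ t, ((x + t) ^ 2)⁻¹ * F (x + t)⁻¹ ∂μ := by
  rw [reciprocalMeasure, integral_map (by fun_prop) hF.aestronglyMeasurable,
    integral_withDensity_eq_integral_toReal_smul (by fun_prop) (by simp)]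
  simp only [ENNReal.toReal_ofReal (inv_nonneg.2 (sq_nonneg (x + _))), smul_eq_mul]

lemma inv_sq_mul_inv_pow (y : ℝ) (k : ℕ) : (y ^ 2)⁻¹ * y⁻¹ ^ k = (y ^ (2 + k))⁻¹ := by
  rw [inv_pow, pow_add, mul_inv]

lemma integrable_pow_reciprocalMeasure (hμ : ∀ᵐ t ∂μ, 0 ≤ t) (hx : 0 < x)
    (hint : Integrable (fun t => ((x + t) ^ 2)⁻¹) μ) (k : ℕ) :
    Integrable (fun u => u ^ k) (reciprocalMeasure μ x) := by
  rw [integrable_reciprocalMeasure_iff (by fun_prop)]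
  simpa only [inv_sq_mul_inv_pow] using
    integrable_inv_add_pow_of_le hμ hx hint (Nat.le_add_right 2 k)

lemma integral_pow_reciprocalMeasure (k : ℕ) :
    ∫ u, u ^ k ∂reciprocalMeasure μ x = stieltjesTransform (2 + k) μ x := by
  rw [integral_reciprocalMeasure (by fun_prop)]
  simp only [inv_sq_mul_inv_pow, stieltjesTransform]

lemma ae_nonneg_reciprocalMeasure (hμ : ∀ᵐ t ∂μ, 0 ≤ t) (hx : 0 < x) :
    ∀ᵐ u ∂reciprocalMeasure μ x, 0 ≤ u := by
  rw [reciprocalMeasure, ae_map_iff (by fun_prop) measurableSet_Ici]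
  filter_upwards [(withDensity_absolutelyContinuous _ _).ae_le hμ] with t ht
  exact inv_nonneg.2 (add_nonneg hx.le ht)

lemma reflectedTaylorSeries_stieltjesTransform_two (hμ : ∀ᵐ t ∂μ, 0 ≤ t)
    (hint : ∀ y, 0 < y → Integrable (fun t => ((y + t) ^ 2)⁻¹) μ) (hx : 0 < x) :
    reflectedTaylorSeries (stieltjesTransform 2 μ) x = sqMomentSeries (reciprocalMeasure μ x) := by
  ext k
  have hsign : (-1 : ℝ) ^ k * (-1) ^ k = 1 := by rw [← mul_pow]; norm_num
  have hfact : (Nat.ascFactorial 2 k : ℝ) = (k + 1) * k.factorial := by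
    rw [← Nat.cast_succ, ← Nat.cast_mul, ← Nat.factorial_succ, add_comm k,
      ← Nat.factorial_mul_ascFactorial 1 k, Nat.factorial_one, one_mul]
  rw [reflectedTaylorSeries, sqMomentSeries, coeff_mk, coeff_mk, integral_pow_reciprocalMeasure,
    iteratedDeriv_stieltjesTransform hμ hint hx, hfact, div_eq_iff (by positivity)]
  linear_combination (k + 1) * k.factorial * stieltjesTransform (2 + k) μ x * hsign

lemma sqMomentSeries_add_smul_dirac_zero {κ : Measure ℝ} {c : ℝ} (hc : 0 ≤ c)
    (hint : ∀ k : ℕ, Integrable (fun u => u ^ k) κ) :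
    sqMomentSeries (κ + ENNReal.ofReal c • Measure.dirac 0) = sqMomentSeries κ + C c := by
  ext k
  rw [map_add, sqMomentSeries, sqMomentSeries, coeff_mk, coeff_mk, coeff_C, integral_add_measure
    (hint k) ((integrable_dirac (by simp)).smul_measure ENNReal.ofReal_ne_top), mul_add,
    integral_smul_measure, integral_dirac, ENNReal.toReal_ofReal hc]
  rcases eq_or_ne k 0 with rfl | hk
  · simp
  · simp [hk]

lemma reflectedTaylorSeries_add_const {f : ℝ → ℝ} (c : ℝ) :
    reflectedTaylorSeries (fun y => f y + c) x = reflectedTaylorSeries f x + C c := by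
  ext k
  rw [map_add, reflectedTaylorSeries, reflectedTaylorSeries, coeff_mk, coeff_mk, coeff_C]
  rcases k with _ | k
  · simp
  · simp [iteratedDeriv_succ']

lemma rpow_neg_two (y : ℝ) : y ^ (-2 : ℝ) = (y ^ 2)⁻¹ := by
  exact_mod_cast Real.rpow_intCast y (-2)

theorem IsGenStieltjes.logCompletelyMonotonic {f : ℝ → ℝ} (hf : IsGenStieltjes 2 f)
    (hpos : ∀ x, 0 < x → 0 < f x) : LogCompletelyMonotonic f := by
  obtain ⟨μ, c, hc, hμ, hrep⟩ := hf
  simp only [rpow_neg_two] at hrep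
  replace hμ : ∀ᵐ t ∂μ, 0 ≤ t := by simpa only [ae_iff, not_le] using! hμ
  have hint : ∀ y, 0 < y → Integrable (fun t => ((y + t) ^ 2)⁻¹) μ := fun y hy => (hrep y hy).1
  have hlocal : ∀ x, 0 < x → f =ᶠ[nhds x] fun y => stieltjesTransform 2 μ y + c := fun x hx => by
    filter_upwards [Ioi_mem_nhds hx] with y hy using (hrep y hy).2
  refine logCompletelyMonotonic_of_coeff_logDerivSeries_nonneg hpos (fun x hx =>
    ((contDiffAt_stieltjesTransform hμ hint hx).add contDiffAt_const).congr_of_eventuallyEq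
      (hlocal x hx)) fun x hx => ?_
  set κ := reciprocalMeasure μ x + ENNReal.ofReal c • Measure.dirac 0 with hκ
  have hpow := integrable_pow_reciprocalMeasure hμ hx (hint x hx)
  have hpowκ : ∀ k : ℕ, Integrable (fun u => u ^ k) κ := fun k =>
    (hpow k).add_measure ((integrable_dirac (by simp)).smul_measure ENNReal.ofReal_ne_top)
  have hseries : reflectedTaylorSeries f x = sqMomentSeries κ := by
    rw [reflectedTaylorSeries_congr (hlocal x hx), reflectedTaylorSeries_add_const,
      reflectedTaylorSeries_stieltjesTransform_two hμ hint hx, hκ,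
      sqMomentSeries_add_smul_dirac_zero hc hpow]
  have : IsFiniteMeasure κ := by simpa [integrable_const_iff] using hpowκ 0
  have : NeZero κ := ⟨fun h => (hpos x hx).ne' <| by
    rw [← constantCoeff_reflectedTaylorSeries f x, hseries, h, constantCoeff_sqMomentSeries]
    simp⟩
  rw [hseries]
  refine coeff_logDerivSeries_sqMomentSeries_nonneg ?_ hpowκ
  refine ae_add_measure_iff.2 ⟨ae_nonneg_reciprocalMeasure hμ hx, ?_⟩
  exact Measure.ae_smul_measure (by simp) _

end StieltjesOrderTwo

section LaplaceTransform

variable {g w : ℝ → ℝ} {x : ℝ}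

lemma laplaceTransform_congr {h : ℝ → ℝ} (hgh : ∀ t, 0 < t → g t = h t) :
    LaplaceTransform g = LaplaceTransform h :=
  funext fun _ => setIntegral_congr_fun measurableSet_Ioi fun t ht =>
    congrArg (Real.exp _ * ·) (hgh t ht)

lemma integrableOn_exp_neg_mul (hx : 0 < x) :
    IntegrableOn (fun t => Real.exp (-x * t)) (Ioi 0) :=
  integrableOn_exp_mul_Ioi (neg_neg_of_pos hx) 0

lemma integrableOn_exp_neg_mul_mul_of_bounded (hx : 0 < x) {C : ℝ} (hg : Measurable g)
    (hC : ∀ t, 0 < t → |g t| ≤ C) : IntegrableOn (fun t => Real.exp (-x * t) * g t) (Ioi 0) :=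
  (integrableOn_exp_neg_mul hx).mul_bdd hg.aestronglyMeasurable
    ((ae_restrict_mem measurableSet_Ioi).mono hC)

lemma laplaceTransform_one_add_const_mul (hx : 0 < x) (ε : ℝ)
    (hg : IntegrableOn (fun t => Real.exp (-x * t) * g t) (Ioi 0)) :
    LaplaceTransform (fun t => 1 + ε * g t) x = 1 / x + ε * LaplaceTransform g x := by
  have hone : ∫ t in Ioi (0 : ℝ), Real.exp (-x * t) = 1 / x := by
    rw [integral_exp_mul_Ioi (neg_neg_of_pos hx)]
    simp
  simp only [LaplaceTransform, mul_add, mul_one, mul_left_comm _ ε]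
  rw [integral_add (integrableOn_exp_neg_mul hx) (hg.const_mul ε), integral_const_mul, hone]

lemma laplaceTransform_pos (hg : IntegrableOn (fun t => Real.exp (-x * t) * g t) (Ioi 0))
    (hpos : ∀ t, 0 < t → 0 < g t) : 0 < LaplaceTransform g x := by
  have hpos' : ∀ t ∈ Ioi (0 : ℝ), 0 < Real.exp (-x * t) * g t := fun t ht =>
    mul_pos (Real.exp_pos _) (hpos t ht)
  have hsupp : Ioi 0 ⊆ Function.support fun t => Real.exp (-x * t) * g t :=
    fun t ht => (hpos' t ht).ne'
  rw [LaplaceTransform, setIntegral_pos_iff_support_of_nonneg_ae _ hg, inter_eq_right.2 hsupp]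
  · simp
  · filter_upwards [ae_restrict_mem measurableSet_Ioi] with t ht using (hpos' t ht).le

lemma laplaceTransform_mul_one_add_exp_of_antiperiodic {T : ℝ} (hT : 0 ≤ T)
    (hg : Function.Antiperiodic g T)
    (hint : IntegrableOn (fun t => Real.exp (-x * t) * g t) (Ioi 0)) :
    LaplaceTransform g x * (1 + Real.exp (-x * T)) =
      ∫ t in Ioc 0 T, Real.exp (-x * t) * g t := by
  have hsplit : LaplaceTransform g x = (∫ t in Ioc 0 T, Real.exp (-x * t) * g t) +
      ∫ t in Ioi T, Real.exp (-x * t) * g t := by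
    rw [LaplaceTransform, ← Ioc_union_Ioi_eq_Ioi hT]
    exact setIntegral_union (Ioc_disjoint_Ioi le_rfl) measurableSet_Ioi
      (hint.mono_set Ioc_subset_Ioi_self) (hint.mono_set (Ioi_subset_Ioi hT))
  have hshift : ∫ t in Ioi T, Real.exp (-x * t) * g t =
      -Real.exp (-x * T) * LaplaceTransform g x := by
    rw [LaplaceTransform, ← integral_const_mul,
      ← (measurePreserving_add_right volume T).setIntegral_preimage_emb
        (measurableEmbedding_addRight T), preimage_add_const_Ioi, sub_self]
    refine integral_congr_ae (Eventually.of_forall fun t => ?_)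
    simp only [hg t, mul_add, Real.exp_add]
    ring
  linear_combination hsplit + hshift

lemma integrableOn_mul_exp_neg_mul (hx : 0 < x) :
    IntegrableOn (fun t => t * Real.exp (-x * t)) (Ioi 0) := by
  simpa using integrableOn_rpow_mul_exp_neg_mul_rpow (s := 1) (p := 1) (b := x) (by simp)
    one_pos hx

lemma integral_mul_exp_neg_mul (hx : 0 < x) :
    ∫ t in Ioi (0 : ℝ), t * Real.exp (-x * t) = (x ^ 2)⁻¹ := by
  have := Real.integral_rpow_mul_exp_neg_mul_Ioi (a := 2) (r := x) two_pos hx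
  norm_num at this
  simpa using this

-- Fubini, because `(x + s)⁻²` is the Laplace transform of `t ↦ t * exp (-s * t)`.
lemma laplaceTransform_mul_laplaceTransform (hw : Measurable w) (hx : 0 < x)
    (hint : IntegrableOn (fun s => w s * ((x + s) ^ 2)⁻¹) (Ioi 0)) :
    LaplaceTransform (fun t => t * LaplaceTransform w t) x =
      ∫ s in Ioi (0 : ℝ), w s * ((x + s) ^ 2)⁻¹ := by
  have hxs : ∀ s ∈ Ioi (0 : ℝ), 0 < x + s := fun s hs => add_pos hx hs
  have hinner : ∀ t, Real.exp (-x * t) * (t * LaplaceTransform w t) =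
      ∫ s in Ioi (0 : ℝ), w s * (t * Real.exp (-(x + s) * t)) := fun t => by
    rw [LaplaceTransform, ← mul_assoc, ← integral_const_mul]
    refine integral_congr_ae (Eventually.of_forall fun s => ?_)
    simp only [neg_add, add_mul, Real.exp_add, neg_mul, mul_comm t s]
    ring
  have hnorm : ∀ s ∈ Ioi (0 : ℝ), ∫ t in Ioi (0 : ℝ), ‖w s * (t * Real.exp (-(x + s) * t))‖ =
      ‖w s * ((x + s) ^ 2)⁻¹‖ := fun s hs => by
    rw [norm_mul, Real.norm_of_nonneg (inv_nonneg.2 (sq_nonneg (x + s))),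
      ← integral_mul_exp_neg_mul (hxs s hs), ← integral_const_mul]
    refine setIntegral_congr_fun measurableSet_Ioi fun t (ht : 0 < t) => ?_
    simp only [norm_mul (w s), Real.norm_of_nonneg (mul_nonneg ht.le (Real.exp_pos _).le)]
  rw [LaplaceTransform, funext hinner, integral_integral_swap]
  · refine setIntegral_congr_fun measurableSet_Ioi fun s hs => ?_
    simp only [integral_const_mul, integral_mul_exp_neg_mul (hxs s hs)]
  · rw [integrable_prod_iff' (by unfold Function.uncurry; fun_prop)]
    constructor
    · filter_upwards [ae_restrict_mem measurableSet_Ioi] with s hs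
      exact (integrableOn_mul_exp_neg_mul (hxs s hs)).const_mul (w s)
    · refine hint.norm.congr ?_
      filter_upwards [ae_restrict_mem measurableSet_Ioi] with s hs using (hnorm s hs).symm

theorem isGenStieltjes_two_laplaceTransform (hw : Measurable w) (hw0 : ∀ s, 0 ≤ w s)
    (hint : ∀ x, 0 < x → IntegrableOn (fun s => w s * ((x + s) ^ 2)⁻¹) (Ioi 0)) :
    IsGenStieltjes 2 (LaplaceTransform fun t => t * LaplaceTransform w t) := by
  refine ⟨(volume.restrict (Ioi 0)).withDensity fun s => ENNReal.ofReal (w s), 0, le_rfl,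
    withDensity_absolutelyContinuous _ _ (by simp [Measure.restrict_apply, Iio_inter_Ioi]),
    fun x hx => ?_⟩
  simp only [rpow_neg_two]
  rw [integrable_withDensity_iff_integrable_smul' (by fun_prop) (by simp),
    integral_withDensity_eq_integral_toReal_smul (by fun_prop) (by simp), add_zero]
  simp only [ENNReal.toReal_ofReal (hw0 _), smul_eq_mul]
  exact ⟨hint x hx, laplaceTransform_mul_laplaceTransform hw hx (hint x hx)⟩

lemma integrableOn_mul_inv_add_sq_of_bounded (hx : 0 < x) {C : ℝ} (hw : Measurable w)
    (hC : ∀ s, |w s| ≤ C) : IntegrableOn (fun s => w s * ((x + s) ^ 2)⁻¹) (Ioi 0) := by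
  have hsq : IntegrableOn (fun s => ((x + s) ^ 2)⁻¹) (Ioi 0) := by
    simpa only [rpow_neg_two, add_comm] using
      integrableOn_add_rpow_Ioi_of_lt (a := -2) (c := 0) (m := x) (by norm_num) (by linarith)
  exact hsq.bdd_mul hw.aestronglyMeasurable (Eventually.of_forall hC)

end LaplaceTransform

section SquareWave

/-- The `2`-antiperiodic wave equal to `1` on `(1 - ν, 1 + ν)` and `0` elsewhere on `[0, 2)`, for
`0 ≤ ν ≤ 1`. Its Laplace transform is `sinh (ν t) / (t cosh t)`. -/
noncomputable def squareWave (ν s : ℝ) : ℝ :=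
  if |2 * Int.fract (s / 2) - 1| < ν then (-1) ^ ⌊s / 2⌋ else 0

variable {ν : ℝ}

lemma measurable_squareWave (ν : ℝ) : Measurable (squareWave ν) :=
  Measurable.ite (measurableSet_lt (by fun_prop) measurable_const)
    ((measurable_from_top (f := fun n : ℤ => (-1 : ℝ) ^ n)).comp (by fun_prop)) measurable_const

lemma abs_squareWave_le_one (ν s : ℝ) : |squareWave ν s| ≤ 1 := by
  unfold squareWave
  split_ifs
  · rw [abs_neg_one_zpow]
  · simp

lemma antiperiodic_squareWave (ν : ℝ) : Function.Antiperiodic (squareWave ν) 2 := fun s => by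
  have hs : (s + 2) / 2 = s / 2 + 1 := by ring
  unfold squareWave
  rw [hs, Int.fract_add_one, Int.floor_add_one, zpow_add_one₀ (by norm_num)]
  split_ifs <;> simp

lemma squareWave_eq_indicator {s : ℝ} (hs : s ∈ Ico 0 2) :
    squareWave ν s = (Ioo (1 - ν) (1 + ν)).indicator 1 s := by
  have hfloor : ⌊s / 2⌋ = 0 := Int.floor_eq_zero_iff.2 ⟨by linarith [hs.1], by linarith [hs.2]⟩
  have hfract : 2 * Int.fract (s / 2) = s := by
    rw [Int.fract, hfloor, Int.cast_zero, sub_zero, mul_div_cancel₀ s two_ne_zero]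
  simp only [squareWave, hfract, hfloor, zpow_zero, indicator, mem_Ioo, Pi.one_apply, abs_lt,
    neg_lt_sub_iff_lt_add, sub_lt_iff_lt_add']

lemma integral_exp_neg_mul_mul_squareWave (hν0 : 0 ≤ ν) (hν1 : ν ≤ 1) {t : ℝ} (ht : t ≠ 0) :
    ∫ s in Ioc 0 2, Real.exp (-t * s) * squareWave ν s =
      (Real.exp (-t * (1 - ν)) - Real.exp (-t * (1 + ν))) / t := by
  have hsub : Ioo (1 - ν) (1 + ν) ⊆ Ico 0 2 :=
    fun s hs => ⟨by linarith [hs.1], by linarith [hs.2]⟩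
  have hind : ∀ s ∈ Ico (0 : ℝ) 2, Real.exp (-t * s) * squareWave ν s =
      (Ioo (1 - ν) (1 + ν)).indicator (fun s => Real.exp (-t * s)) s := fun s hs => by
    rw [squareWave_eq_indicator hs]
    simp [indicator]
  rw [integral_Ioc_eq_integral_Ioo, ← integral_Ico_eq_integral_Ioo,
    setIntegral_congr_fun measurableSet_Ico hind, setIntegral_indicator measurableSet_Ioo,
    inter_eq_right.2 hsub, ← integral_Ioc_eq_integral_Ioo,
    ← intervalIntegral.integral_of_le (by linarith),
    intervalIntegral.integral_comp_mul_left Real.exp (neg_ne_zero.2 ht), integral_exp, smul_eq_mul]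
  field_simp
  ring

theorem mul_laplaceTransform_squareWave (hν0 : 0 ≤ ν) (hν1 : ν ≤ 1) {t : ℝ} (ht : 0 < t) :
    t * LaplaceTransform (squareWave ν) t = Real.sinh (ν * t) / Real.cosh t := by
  have hint := integrableOn_exp_neg_mul_mul_of_bounded ht (measurable_squareWave ν)
    fun s _ => abs_squareWave_le_one ν s
  have hL := laplaceTransform_mul_one_add_exp_of_antiperiodic zero_le_two
    (antiperiodic_squareWave ν) hint
  rw [integral_exp_neg_mul_mul_squareWave hν0 hν1 ht.ne', eq_div_iff ht.ne'] at hL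
  have hexp1 : Real.exp (-t * (1 - ν)) = Real.exp (-t) * Real.exp (ν * t) := by
    rw [← Real.exp_add]; ring_nf
  have hexp2 : Real.exp (-t * (1 + ν)) = Real.exp (-t) * Real.exp (-(ν * t)) := by
    rw [← Real.exp_add]; ring_nf
  have hexp3 : Real.exp (-t * 2) = Real.exp (-t) * Real.exp (-t) := by
    rw [← Real.exp_add]; ring_nf
  have hexp4 : Real.exp t * Real.exp (-t) = 1 := by rw [← Real.exp_add]; simp
  rw [hexp1, hexp2, hexp3] at hL
  rw [eq_div_iff (Real.cosh_pos t).ne', Real.sinh_eq, Real.cosh_eq]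
  linear_combination (Real.exp t / 2) * hL + ((Real.exp (ν * t) - Real.exp (-(ν * t))) / 2 -
    t * LaplaceTransform (squareWave ν) t * Real.exp (-t) / 2) * hexp4

end SquareWave

section HyperbolicRatio

variable {ν x : ℝ}

lemma abs_sinh_mul_div_cosh_lt_one (hν : |ν| ≤ 1) (t : ℝ) :
    |Real.sinh (ν * t) / Real.cosh t| < 1 := by
  rw [abs_div, abs_of_pos (Real.cosh_pos t), div_lt_one (Real.cosh_pos t), Real.abs_sinh,
    ← Real.cosh_abs t, abs_mul]
  exact (Real.sinh_le_sinh.2 (mul_le_of_le_one_left (abs_nonneg t) hν)).trans_lt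
    (Real.sinh_lt_cosh _)

lemma integrableOn_exp_neg_mul_mul_sinh_div_cosh (hν : |ν| ≤ 1) (hx : 0 < x) :
    IntegrableOn (fun t => Real.exp (-x * t) * (Real.sinh (ν * t) / Real.cosh t)) (Ioi 0) :=
  integrableOn_exp_neg_mul_mul_of_bounded hx (by fun_prop)
    fun t _ => (abs_sinh_mul_div_cosh_lt_one hν t).le

lemma half_mul_nielsenBeta_half (y : ℝ) :
    1 / 2 * nielsenBeta (y / 2) =
      ∫ t in Ioi (0 : ℝ), Real.exp (-y * t) / (1 + Real.exp (-2 * t)) := by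
  have hcomp := integral_comp_mul_left_Ioi
    (fun t => Real.exp (-(y / 2) * t) / (1 + Real.exp (-t))) 0 two_pos
  rw [mul_zero, smul_eq_mul] at hcomp
  rw [nielsenBeta, one_div, ← hcomp]
  ring_nf

lemma integrableOn_exp_neg_mul_div_one_add_exp {y : ℝ} (hy : 0 < y) :
    IntegrableOn (fun t => Real.exp (-y * t) / (1 + Real.exp (-2 * t))) (Ioi 0) := by
  refine integrableOn_exp_neg_mul_mul_of_bounded (C := 1) hy (by fun_prop) fun t _ => ?_
  rw [abs_of_pos (by positivity)]
  exact inv_le_one_of_one_le₀ (le_add_of_nonneg_right (Real.exp_pos _).le)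

lemma exp_neg_mul_mul_sinh_div_cosh (x ν t : ℝ) :
    Real.exp (-x * t) * (Real.sinh (ν * t) / Real.cosh t) =
      Real.exp (-(x + 1 - ν) * t) / (1 + Real.exp (-2 * t)) -
        Real.exp (-(x + 1 + ν) * t) / (1 + Real.exp (-2 * t)) := by
  have hexp1 : Real.exp (-(x + 1 - ν) * t) =
      Real.exp (-x * t) * Real.exp (-t) * Real.exp (ν * t) := by
    simp only [← Real.exp_add]; ring_nf
  have hexp2 : Real.exp (-(x + 1 + ν) * t) =
      Real.exp (-x * t) * Real.exp (-t) * Real.exp (-(ν * t)) := by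
    simp only [← Real.exp_add]; ring_nf
  have hexp3 : Real.exp (-2 * t) = Real.exp (-t) * Real.exp (-t) := by
    rw [← Real.exp_add]; ring_nf
  have hexp4 : Real.exp t * Real.exp (-t) = 1 := by rw [← Real.exp_add]; simp
  rw [hexp1, hexp2, hexp3, ← sub_div, Real.sinh_eq, Real.cosh_eq, ← mul_div_assoc,
    div_eq_div_iff (by positivity) (by positivity)]
  linear_combination (-(Real.exp (-x * t) * (Real.exp (ν * t) - Real.exp (-(ν * t)))) / 2) * hexp4

theorem laplaceTransform_sinh_div_cosh (hν : |ν| ≤ 1) (hx : 0 < x) :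
    LaplaceTransform (fun t => Real.sinh (ν * t) / Real.cosh t) x =
      1 / 2 * (nielsenBeta ((x + 1 - ν) / 2) - nielsenBeta ((x + 1 + ν) / 2)) := by
  obtain ⟨hν0, hν1⟩ := abs_le.1 hν
  rw [mul_sub, half_mul_nielsenBeta_half, half_mul_nielsenBeta_half,
    ← integral_sub (integrableOn_exp_neg_mul_div_one_add_exp (by linarith))
      (integrableOn_exp_neg_mul_div_one_add_exp (by linarith))]
  simp only [LaplaceTransform, exp_neg_mul_mul_sinh_div_cosh]

theorem isGenStieltjes_two_laplaceTransform_one_add_sinh_div_cosh (hν : |ν| ≤ 1) {ε : ℝ}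
    (hε : |ε| ≤ 1) :
    IsGenStieltjes 2
      (LaplaceTransform fun t => 1 + ε * (Real.sinh (ν * t) / Real.cosh t)) := by
  wlog hν0 : 0 ≤ ν generalizing ν ε
  · simpa only [neg_mul, Real.sinh_neg, neg_div, mul_neg, neg_neg] using
      this (ν := -ν) (ε := -ε) (by rwa [abs_neg]) (by rwa [abs_neg])
        (neg_nonneg.2 (le_of_not_ge hν0))
  set w : ℝ → ℝ := fun s => 1 + ε * squareWave ν s with hw
  have hmeas : Measurable w := ((measurable_squareWave ν).const_mul ε).const_add 1
  have hwave : ∀ s, |ε * squareWave ν s| ≤ 1 := fun s => by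
    rw [abs_mul]
    exact mul_le_one₀ hε (abs_nonneg _) (abs_squareWave_le_one ν s)
  have hnonneg : ∀ s, 0 ≤ w s := fun s => by
    linarith [neg_le_of_abs_le (hwave s)]
  have hbound : ∀ s, |w s| ≤ 2 := fun s => by
    rw [abs_of_nonneg (hnonneg s)]
    linarith [le_of_abs_le (hwave s)]
  have hlaplace : ∀ t, 0 < t →
      1 + ε * (Real.sinh (ν * t) / Real.cosh t) = t * LaplaceTransform w t := fun t ht => by
    rw [hw, laplaceTransform_one_add_const_mul ht ε
      (integrableOn_exp_neg_mul_mul_of_bounded ht (measurable_squareWave ν)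
        fun s _ => abs_squareWave_le_one ν s),
      ← mul_laplaceTransform_squareWave hν0 (le_of_abs_le hν) ht]
    field_simp
  rw [laplaceTransform_congr hlaplace]
  exact isGenStieltjes_two_laplaceTransform hmeas hnonneg
    fun x hx => integrableOn_mul_inv_add_sq_of_bounded hx hmeas hbound

lemma laplaceTransform_one_add_sinh_div_cosh_pos (hν : |ν| ≤ 1) {ε : ℝ} (hε : |ε| ≤ 1)
    (hx : 0 < x) : 0 < LaplaceTransform (fun t => 1 + ε * (Real.sinh (ν * t) / Real.cosh t)) x := by
  have hratio : ∀ t, |ε * (Real.sinh (ν * t) / Real.cosh t)| < 1 := fun t => by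
    rw [abs_mul]
    exact mul_lt_one_of_nonneg_of_lt_one_right hε (abs_nonneg _) (abs_sinh_mul_div_cosh_lt_one hν t)
  refine laplaceTransform_pos (integrableOn_exp_neg_mul_mul_of_bounded (C := 2) hx (by fun_prop)
    fun t _ => ?_) fun t _ => ?_
  · rw [abs_le]
    constructor <;> linarith [abs_lt.1 (hratio t)]
  · linarith [neg_lt_of_abs_lt (hratio t)]

end HyperbolicRatio

theorem stmt8_general (ν : ℝ) (hν : |ν| ≤ 1) (ε : ℝ) (hε : |ε| ≤ 1) :
    IsGenStieltjes 2 (LaplaceTransform (fun x => 1 + ε * (Real.sinh (ν * x) / Real.cosh x))) ∧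
    LogCompletelyMonotonic
      (LaplaceTransform (fun x => 1 + ε * (Real.sinh (ν * x) / Real.cosh x))) ∧
    (∀ x : ℝ, 0 < x →
      LaplaceTransform (fun x => 1 + ε * (Real.sinh (ν * x) / Real.cosh x)) x
        = 1 / x + ε * ((1 / 2) *
            (nielsenBeta ((x + 1 - ν) / 2) - nielsenBeta ((x + 1 + ν) / 2)))) := by
  have hstieltjes := isGenStieltjes_two_laplaceTransform_one_add_sinh_div_cosh hν hε
  refine ⟨hstieltjes, hstieltjes.logCompletelyMonotonic fun x hx =>
    laplaceTransform_one_add_sinh_div_cosh_pos hν hε hx, fun x hx => ?_⟩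
  rw [laplaceTransform_one_add_const_mul hx ε
    (integrableOn_exp_neg_mul_mul_sinh_div_cosh hν hx), laplaceTransform_sinh_div_cosh hν hx]

/-- Theorem: for `ν ∈ [0,1]` and either sign `ε = ±1`, the Laplace transform of
`τ(x) = 1 ± sinh(νx)/cosh x` is a generalized Stieltjes function of order 2 (hence
logarithmically completely monotonic), and
`L(τ)(x) = 1/x ± (1/2)(β((x+1-ν)/2) - β((x+1+ν)/2))`. -/
theorem stmt8 (ν : ℝ) (hν0 : 0 ≤ ν) (hν1 : ν ≤ 1) (ε : ℝ) (hε : ε = 1 ∨ ε = -1) :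
    IsGenStieltjes 2 (LaplaceTransform (fun x => 1 + ε * (Real.sinh (ν * x) / Real.cosh x))) ∧
    LogCompletelyMonotonic
      (LaplaceTransform (fun x => 1 + ε * (Real.sinh (ν * x) / Real.cosh x))) ∧
    (∀ x : ℝ, 0 < x →
      LaplaceTransform (fun x => 1 + ε * (Real.sinh (ν * x) / Real.cosh x)) x
        = 1 / x + ε * ((1 / 2) *
            (nielsenBeta ((x + 1 - ν) / 2) - nielsenBeta ((x + 1 + ν) / 2)))) := by
  exact stmt8_general ν ((abs_of_nonneg hν0).trans_le hν1) ε
    (by rcases hε with rfl | rfl <;> simp)
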